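/- arXiv:2001.01657 — 3 statements merged into one kernel-verified Lean document; each statement's English description precedes it below -/
import Mathlib

section
/- Let Ω₁, Ω₂ be open subsets of ℝⁿ and let f be a homeomorphism of Ω₁ onto Ω₂ such that the composition operator T_f(u) = u∘f maps C₀(Ω₂) ∩ BV(Ω₂) into BV(Ω₁). Then f ∈ BV_loc(Ω₁, Ω₂) and there exists a constant K > 0 such that |Df|(f⁻¹(A)) ≤ K·Lⁿ(A) for all Borel sets A ⊆ Ω₂. -/
open MeasureTheory Metric Set Filter
open scoped ENNReal Topology NNReal

noncomputable section

/-- `ℝⁿ` as a Euclidean space. -/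
abbrev En (n : ℕ) : Type := EuclideanSpace ℝ (Fin n)

/-- A smooth test function compactly supported inside the set `Ω`. -/
def SmoothTest {n : ℕ} (Ω : Set (En n)) (φ : En n → ℝ) : Prop :=
  ContDiff ℝ (⊤ : ℕ∞) φ ∧ HasCompactSupport φ ∧ tsupport φ ⊆ Ω

/-- Frobenius norm of an `m × n` array of reals. -/
def frobNorm {m n : ℕ} (M : Fin m → Fin n → ℝ) : ℝ :=
  Real.sqrt (∑ j, ∑ i, M j i ^ 2)

/-- `Df = σ ⬝ ν` is the polar decomposition of the distributional derivative of the
mapping `f : Ω → ℝᵐ`: `σ` is a matrix field of unit Frobenius norm `ν`-a.e., `ν` is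
carried by `Ω`, and the integration-by-parts formula holds against all smooth test
functions compactly supported in `Ω`.  In particular `ν = |Df|` is the total variation
measure of `Df` on `Ω`. -/
def IsVariationMeasure {n m : ℕ} (Ω : Set (En n)) (f : En n → En m)
    (σ : En n → Fin m → Fin n → ℝ) (ν : Measure (En n)) : Prop :=
  Measurable σ ∧ (∀ᵐ x ∂ν, frobNorm (σ x) = 1) ∧ ν Ωᶜ = 0 ∧
    ∀ φ : En n → ℝ, SmoothTest Ω φ → ∀ (j : Fin m) (i : Fin n),
      ∫ x in Ω, f x j * fderiv ℝ φ x (EuclideanSpace.single i 1) ∂volume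
        = - ∫ x, φ x * σ x j i ∂ν

/-- `f ∈ BV(Ω, ℝᵐ)` with total variation measure `ν`. -/
def MemBV {n m : ℕ} (Ω : Set (En n)) (f : En n → En m) (ν : Measure (En n)) : Prop :=
  IntegrableOn f Ω volume ∧ ν Ω < ⊤ ∧ ∃ σ, IsVariationMeasure Ω f σ ν

/-- `f ∈ BV_loc(Ω, ℝᵐ)` with total variation measure `ν`, finite on compact subsets of `Ω`. -/
def MemBVloc {n m : ℕ} (Ω : Set (En n)) (f : En n → En m) (ν : Measure (En n)) : Prop :=
  LocallyIntegrableOn f Ω volume ∧ (∀ C : Set (En n), IsCompact C → C ⊆ Ω → ν C < ⊤) ∧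
    ∃ σ, IsVariationMeasure Ω f σ ν

/-- Scalar version of `IsVariationMeasure`: `Du = σ ⬝ ν` with `|σ| = 1` `ν`-a.e. -/
def IsVariationMeasureS {n : ℕ} (Ω : Set (En n)) (u : En n → ℝ)
    (σ : En n → Fin n → ℝ) (ν : Measure (En n)) : Prop :=
  Measurable σ ∧ (∀ᵐ x ∂ν, Real.sqrt (∑ i, σ x i ^ 2) = 1) ∧ ν Ωᶜ = 0 ∧
    ∀ φ : En n → ℝ, SmoothTest Ω φ → ∀ i : Fin n,
      ∫ x in Ω, u x * fderiv ℝ φ x (EuclideanSpace.single i 1) ∂volume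
        = - ∫ x, φ x * σ x i ∂ν

/-- `u ∈ BV(Ω)` with total variation measure `ν`. -/
def MemBVs {n : ℕ} (Ω : Set (En n)) (u : En n → ℝ) (ν : Measure (En n)) : Prop :=
  IntegrableOn u Ω volume ∧ ν Ω < ⊤ ∧ ∃ σ, IsVariationMeasureS Ω u σ ν

/-- `u ∈ BV_loc(Ω)` with total variation measure `ν`. -/
def MemBVlocs {n : ℕ} (Ω : Set (En n)) (u : En n → ℝ) (ν : Measure (En n)) : Prop :=
  LocallyIntegrableOn u Ω volume ∧ (∀ C : Set (En n), IsCompact C → C ⊆ Ω → ν C < ⊤) ∧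
    ∃ σ, IsVariationMeasureS Ω u σ ν

/-- `z` is the approximate limit of `f` at `x`. -/
def ApproxLimAt {n m : ℕ} (f : En n → En m) (x : En n) (z : En m) : Prop :=
  Tendsto (fun r : ℝ =>
      (∫ y in Metric.ball x r, ‖f y - z‖ ∂volume) / (volume (Metric.ball x r)).toReal)
    (nhdsWithin 0 (Set.Ioi 0)) (nhds 0)

/-- `f̃⁻¹(A)`: the preimage of `A` under the precise representative (approximate limit)
of `f`; a point belongs to it iff the approximate limit of `f` exists there and lies in `A`. -/
def tildePreimage {n m : ℕ} (f : En n → En m) (A : Set (En m)) : Set (En n) :=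
  {x | ∃ z ∈ A, ApproxLimAt f x z}

/-- `f` has no jump part: its variation measure does not charge the approximate
discontinuity set of `f`. -/
def NoJumpPart {n m : ℕ} (f : En n → En m) (ν : Measure (En n)) : Prop :=
  ν {x | ¬ ∃ z, ApproxLimAt f x z} = 0

/-- `f` is a homeomorphism of `Ω₁` onto `Ω₂`, with inverse `g`. -/
def IsHomeoOn {n : ℕ} (f g : En n → En n) (Ω₁ Ω₂ : Set (En n)) : Prop :=
  ContinuousOn f Ω₁ ∧ ContinuousOn g Ω₂ ∧ MapsTo f Ω₁ Ω₂ ∧ MapsTo g Ω₂ Ω₁ ∧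
    (∀ x ∈ Ω₁, g (f x) = x) ∧ (∀ y ∈ Ω₂, f (g y) = y)

/-- `u ∈ C₀(Ω)`: continuous on `Ω` and vanishing at the boundary of `Ω`. -/
def MemCZero {n : ℕ} (Ω : Set (En n)) (u : En n → ℝ) : Prop :=
  ContinuousOn u Ω ∧ ∀ ε : ℝ, 0 < ε → ∃ C : Set (En n), IsCompact C ∧ C ⊆ Ω ∧
    ∀ x ∈ Ω \ C, |u x| ≤ ε


/-- Continuous with compact support. -/
def CC {n : ℕ} (a : En n → ℝ) : Prop := Continuous a ∧ HasCompactSupport a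

/-- Smooth with compact support. -/
def SC {n : ℕ} (a : En n → ℝ) : Prop := ContDiff ℝ (⊤ : ℕ∞) a ∧ HasCompactSupport a

/-- The `i`-th partial derivative. -/
def pd {n : ℕ} (i : Fin n) (a : En n → ℝ) (x : En n) : ℝ :=
  fderiv ℝ a x (EuclideanSpace.single i 1)

section basics
variable {n : ℕ}

lemma SC.cc {a : En n → ℝ} (h : SC a) : CC a := ⟨h.1.continuous, h.2⟩

lemma SC.diff {a : En n → ℝ} (h : SC a) : Differentiable ℝ a :=
  h.1.differentiable (by simp)

lemma CC.integrable {a : En n → ℝ} (h : CC a) : Integrable a :=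
  h.1.integrable_of_hasCompactSupport h.2

lemma pd_cont {a : En n → ℝ} (h : ContDiff ℝ (⊤ : ℕ∞) a) (i : Fin n) : Continuous (pd i a) :=
  (h.continuous_fderiv (by simp)).clm_apply continuous_const

lemma pd_supp {a : En n → ℝ} (i : Fin n) : tsupport (pd i a) ⊆ tsupport a :=
  (tsupport_fderiv_apply_subset ℝ (EuclideanSpace.single i 1))

lemma SC.pd_cc {a : En n → ℝ} (h : SC a) (i : Fin n) : CC (pd i a) :=
  ⟨pd_cont h.1 i, h.2.fderiv_apply ℝ _⟩

lemma CC.mul_left {a b : En n → ℝ} (ha : CC a) (hb : Continuous b) : CC (fun x => b x * a x) :=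
  ⟨hb.mul ha.1, ha.2.mul_left⟩

lemma CC.mul_right {a b : En n → ℝ} (ha : CC a) (hb : Continuous b) : CC (fun x => a x * b x) :=
  ⟨ha.1.mul hb, ha.2.mul_right⟩

lemma SC.mul_left {a b : En n → ℝ} (ha : SC a) (hb : ContDiff ℝ (⊤ : ℕ∞) b) :
    SC (fun x => b x * a x) :=
  ⟨hb.mul ha.1, ha.2.mul_left⟩

lemma SC.mul_right {a b : En n → ℝ} (ha : SC a) (hb : ContDiff ℝ (⊤ : ℕ∞) b) :
    SC (fun x => a x * b x) :=
  ⟨ha.1.mul hb, ha.2.mul_right⟩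

lemma CC.add {a b : En n → ℝ} (ha : CC a) (hb : CC b) : CC (fun x => a x + b x) :=
  ⟨ha.1.add hb.1, ha.2.add hb.2⟩

lemma SC.add {a b : En n → ℝ} (ha : SC a) (hb : SC b) : SC (fun x => a x + b x) :=
  ⟨ha.1.add hb.1, ha.2.add hb.2⟩

lemma CC.smul {a : En n → ℝ} (ha : CC a) (c : ℝ) : CC (fun x => c * a x) :=
  ha.mul_left continuous_const

lemma CC.sub {a b : En n → ℝ} (ha : CC a) (hb : CC b) : CC (fun x => a x - b x) := by
  have := ha.add (hb.smul (-1))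
  convert this using 2
  ring

lemma CC.bdd {a : En n → ℝ} (ha : CC a) : ∃ M, 0 ≤ M ∧ ∀ x, |a x| ≤ M := by
  obtain ⟨M, hM⟩ := ha.1.norm.bddAbove_range_of_hasCompactSupport ha.2.norm
  exact ⟨max M 0, le_max_right _ _, fun x => le_max_of_le_left (hM ⟨x, rfl⟩)⟩

lemma CC.unif {a : En n → ℝ} (ha : CC a) {ε : ℝ} (hε : 0 < ε) :
    ∃ δ > 0, ∀ x y, dist x y < δ → |a x - a y| ≤ ε := by
  have := ha.2.uniformContinuous_of_continuous ha.1
  obtain ⟨δ, hδ, h⟩ := Metric.uniformContinuous_iff.1 this ε hε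
  exact ⟨δ, hδ, fun x y hxy => (h hxy).le⟩

lemma ibp {a φ : En n → ℝ} (ha : ContDiff ℝ (⊤ : ℕ∞) a) (hφ : SC φ) (i : Fin n) :
    ∫ x, a x * pd i φ x = - ∫ x, pd i a x * φ x := by
  refine integral_mul_fderiv_eq_neg_fderiv_mul_of_integrable ?_ ?_ ?_ ?_ ?_
  · exact (hφ.cc.mul_left (pd_cont ha i)).integrable
  · exact ((hφ.pd_cc i).mul_left ha.continuous).integrable
  · exact (hφ.cc.mul_left ha.continuous).integrable
  · intro x _; exact ha.differentiable (by simp) x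
  · intro x _; exact hφ.diff x

/-- Standard mollification at scale `δ`. -/
lemma exists_moll (n : ℕ) {δ : ℝ} (hδ : 0 < δ) : ∃ R : (En n → ℝ) → (En n → ℝ),
    (∀ a, CC a → SC (R a)) ∧
    (∀ a, CC a → tsupport (R a) ⊆ cthickening δ (tsupport a)) ∧
    (∀ a, CC a → ∀ x c ε, 0 ≤ ε → (∀ y ∈ ball x δ, |a y - c| ≤ ε) → |R a x - c| ≤ ε) ∧
    (∀ a b, CC a → CC b → ∫ x, R a x * b x = ∫ x, a x * R b x) ∧
    (∀ a, SC a → ∀ i, pd i (R a) = R (pd i a)) := by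
  let ρ : ContDiffBump (0 : En n) := ⟨δ / 2, δ, by linarith, by linarith⟩
  let r : En n → ℝ := ρ.normed volume
  have rsm : ContDiff ℝ (⊤ : ℕ∞) r := ρ.contDiff_normed
  have rcs : HasCompactSupport r := ρ.hasCompactSupport_normed
  have rli : LocallyIntegrable r := rsm.continuous.locallyIntegrable
  have rsupp : Function.support r = ball 0 δ := ρ.support_normed_eq
  let R : (En n → ℝ) → (En n → ℝ) := fun a =>
    convolution r a (ContinuousLinearMap.lsmul ℝ ℝ) volume
  have Rdef : ∀ a x, R a x = ∫ t, r t * a (x - t) := fun a x => by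
    simp only [R, convolution_def]; rfl
  refine ⟨R, ?_, ?_, ?_, ?_, ?_⟩
  · intro a ha
    exact ⟨rcs.contDiff_convolution_left _ rsm ha.1.locallyIntegrable, rcs.convolution _ ha.2⟩
  · intro a ha
    refine closure_minimal ?_ isClosed_cthickening
    intro x hx
    obtain ⟨t, ht, y, hy, rfl⟩ := support_convolution_subset _ hx
    rw [rsupp] at ht
    apply thickening_subset_cthickening
    rw [mem_thickening_iff]
    refine ⟨y, subset_tsupport _ hy, ?_⟩
    simpa [dist_eq_norm] using ht
  · intro a ha x c ε hε h
    exact dist_convolution_le hε rsupp.subset (fun x => ρ.nonneg_normed x) ρ.integral_normed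
      ha.1.aestronglyMeasurable h
  · intro a b ha hb
    simp only [Rdef]
    have h1 : ∀ a b : En n → ℝ, CC a → CC b →
        ∫ x, (∫ t, r t * a (x - t)) * b x = ∫ t, r t * ∫ x, a (x - t) * b x := by
      intro a b ha hb
      simp only [← integral_mul_const, ← integral_const_mul]
      rw [integral_integral_swap]
      · simp only [mul_assoc]
      · apply Continuous.integrable_of_hasCompactSupport
        · have := rsm.continuous
          have := ha.1
          have := hb.1
          unfold Function.uncurry
          fun_prop
        · refine HasCompactSupport.intro (hb.2.isCompact.prod rcs.isCompact) ?_
          rintro ⟨x, t⟩ hxt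
          simp only [Function.uncurry]
          by_cases hx : x ∈ tsupport b
          · have : t ∉ tsupport r := fun h => hxt ⟨hx, h⟩
            simp [image_eq_zero_of_notMem_tsupport this]
          · simp [image_eq_zero_of_notMem_tsupport hx]
    rw [h1 a b ha hb]
    have : ∀ x, a x * ∫ t, r t * b (x - t) = (∫ t, r t * b (x - t)) * a x := fun x => mul_comm _ _
    simp only [this]
    rw [h1 b a hb ha, ← integral_neg_eq_self]
    congr 1; ext t
    rw [show r (-t) = r t from ρ.normed_neg t]
    congr 1
    rw [← integral_add_right_eq_self _ (-t)]
    congr 1; ext x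
    simp [sub_eq_add_neg, mul_comm]
  · intro a ha i
    ext x
    have := (ha.2.hasFDerivAt_convolution_right (ContinuousLinearMap.lsmul ℝ ℝ) rli
      (ha.1.of_le (by simp)) x).fderiv
    unfold pd
    rw [this, convolution_precompR_apply _ rli (ha.2.fderiv ℝ) (ha.1.continuous_fderiv (by simp))]

/-- Uniform smooth approximation with control on supports. -/
lemma exists_smooth_approx {a : En n → ℝ} (ha : CC a) {ε : ℝ} (hε : 0 < ε) :
    ∃ b, SC b ∧ (∀ x, |b x - a x| ≤ ε) ∧ tsupport b ⊆ cthickening ε (tsupport a) ∧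
      ∀ M, 0 ≤ M → (∀ x, |a x| ≤ M) → ∀ x, |b x| ≤ M := by
  obtain ⟨δ, hδ, hu⟩ := ha.unif hε
  obtain ⟨R, h1, h2, h3, -, -⟩ := exists_moll n (lt_min hδ hε)
  refine ⟨R a, h1 a ha, fun x => ?_, (h2 a ha).trans (cthickening_mono (min_le_right _ _) _), ?_⟩
  · refine h3 a ha x (a x) ε hε.le fun y hy => hu y x ?_
    exact (mem_ball.1 hy).trans_le (min_le_left _ _)
  · intro M hM h x
    simpa using h3 a ha x 0 M hM (fun y _ => by simpa using h y)

end basics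


/-- `T` is a bounded linear functional on `C_c` representing the `i`-th distributional
derivative of `W`. -/
structure IsD {n : ℕ} (i : Fin n) (W : En n → ℝ) (T : (En n → ℝ) → ℝ) : Prop where
  add : ∀ a b, CC a → CC b → T (fun x => a x + b x) = T a + T b
  smul : ∀ (c : ℝ) a, CC a → T (fun x => c * a x) = c * T a
  bdd : ∃ M, 0 ≤ M ∧ ∀ a, CC a → ∀ δ, 0 ≤ δ → (∀ x, |a x| ≤ δ) → |T a| ≤ M * δ
  repr : ∀ φ, SC φ → ∫ x, W x * pd i φ x = - T φ

section isd
variable {n : ℕ} {i : Fin n}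

lemma integral_close {a a' b : En n → ℝ} (ha : Continuous a) (ha' : Continuous a') (hb : CC b)
    {ε : ℝ} (h : ∀ x, |a x - a' x| ≤ ε) :
    |(∫ x, a x * b x) - ∫ x, a' x * b x| ≤ ε * ∫ x, |b x| := by
  rw [← integral_sub (hb.mul_left ha).integrable (hb.mul_left ha').integrable,
    ← integral_const_mul]
  refine (abs_integral_le_integral_abs).trans (integral_mono ?_ ?_ ?_)
  · exact ((hb.mul_left ha).sub (hb.mul_left ha')).integrable.abs
  · exact hb.integrable.abs.const_mul _
  · intro x
    simp only [← sub_mul, abs_mul]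
    exact mul_le_mul_of_nonneg_right (h x) (abs_nonneg _)

lemma IsD.sub {W : En n → ℝ} {T} (h : IsD i W T) {a b : En n → ℝ} (ha : CC a) (hb : CC b) :
    T (fun x => a x - b x) = T a - T b := by
  have h1 := h.add a (fun x => (-1) * b x) ha (hb.smul _)
  rw [h.smul _ _ hb] at h1
  rw [show (fun x => a x - b x) = (fun x => a x + (-1) * b x) by ext; ring, h1]; ring

/-- Two bounded functionals which agree on smooth functions agree. -/
lemma eq_of_smooth {T T' : (En n → ℝ) → ℝ}
    (hs : ∀ a b, CC a → CC b → T (fun x => a x - b x) = T a - T b)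
    (hs' : ∀ a b, CC a → CC b → T' (fun x => a x - b x) = T' a - T' b)
    (hb : ∃ M, 0 ≤ M ∧ ∀ a, CC a → ∀ δ, 0 ≤ δ → (∀ x, |a x| ≤ δ) → |T a| ≤ M * δ)
    (hb' : ∃ M, 0 ≤ M ∧ ∀ a, CC a → ∀ δ, 0 ≤ δ → (∀ x, |a x| ≤ δ) → |T' a| ≤ M * δ)
    (heq : ∀ φ, SC φ → T φ = T' φ) {a : En n → ℝ} (ha : CC a) : T a = T' a := by
  obtain ⟨M, hM, hb⟩ := hb
  obtain ⟨M', hM', hb'⟩ := hb'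
  by_contra hne
  have hpos : 0 < |T a - T' a| := abs_pos.2 (sub_ne_zero.2 hne)
  set ε := |T a - T' a| / (2 * (M + M' + 1)) with hε
  have hε0 : 0 < ε := by positivity
  obtain ⟨b, hbs, hba, -, -⟩ := exists_smooth_approx ha hε0
  have e1 := hb _ (hbs.cc.sub ha) ε hε0.le hba
  have e2 := hb' _ (hbs.cc.sub ha) ε hε0.le hba
  rw [hs _ _ hbs.cc ha] at e1
  rw [hs' _ _ hbs.cc ha, ← heq b hbs] at e2
  have e3 : |T a - T' a| ≤ (M + M') * ε := by
    rw [show T a - T' a = (T b - T' a) - (T b - T a) by ring]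
    refine (abs_sub _ _).trans ?_
    linarith
  have e4 : |T a - T' a| = 2 * (M + M' + 1) * ε := by
    rw [hε]; field_simp
  nlinarith

lemma IsD.sharp {W : En n → ℝ} {T} (h : IsD i W T) {M : ℝ}
    (hb : ∀ φ, SC φ → (∀ x, |φ x| ≤ 1) → |∫ x, W x * pd i φ x| ≤ M) {a : En n → ℝ} (ha : CC a)
    {δ : ℝ} (hδ : 0 < δ) (hδa : ∀ x, |a x| ≤ δ) : |T a| ≤ M * δ := by
  have hsm : ∀ φ, SC φ → (∀ x, |φ x| ≤ δ) → |T φ| ≤ M * δ := by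
    intro φ hφ hle
    have hψ : SC (fun x => δ⁻¹ * φ x) := hφ.mul_left contDiff_const
    have := hb _ hψ (fun x => by
      rw [abs_mul, abs_of_pos (inv_pos.2 hδ), inv_mul_le_iff₀ hδ]; simpa using hle x)
    rw [h.repr _ hψ, h.smul _ _ hφ.cc, abs_neg, abs_mul, abs_of_pos (inv_pos.2 hδ),
      inv_mul_le_iff₀ hδ] at this
    linarith
  obtain ⟨M', hM', hb'⟩ := h.bdd
  refine le_of_forall_pos_le_add fun ε hε => ?_
  have hε' : 0 < ε / (M' + 1) := by positivity
  obtain ⟨b, hbs, hba, -, hbM⟩ := exists_smooth_approx ha hε'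
  have e1 := hb' _ (hbs.cc.sub ha) _ hε'.le hba
  rw [h.sub hbs.cc ha] at e1
  have e2 := hsm b hbs (hbM δ hδ.le hδa)
  have e3 : M' * (ε / (M' + 1)) ≤ ε := by
    rw [mul_div_assoc', div_le_iff₀ (by positivity)]; nlinarith
  have := abs_sub_abs_le_abs_sub (T a) (T b)
  rw [abs_sub_comm] at this
  linarith

lemma IsD.bdd_mul {W : En n → ℝ} {T} (h : IsD i W T) {b : En n → ℝ} (hb : Continuous b)
    {B : ℝ} (hB : ∀ x, |b x| ≤ B) :
    ∃ M, 0 ≤ M ∧ ∀ a, CC a → ∀ δ, 0 ≤ δ → (∀ x, |a x| ≤ δ) → |T (fun x => b x * a x)| ≤ M * δ := by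
  obtain ⟨M, hM, hT⟩ := h.bdd
  have hB0 : 0 ≤ B := (abs_nonneg _).trans (hB 0)
  refine ⟨M * B, by positivity, fun a ha δ hδ hle => ?_⟩
  have := hT _ (ha.mul_left hb) (B * δ) (by positivity) (fun x => by
    rw [abs_mul]; exact mul_le_mul (hB x) (hle x) (abs_nonneg _) hB0)
  linarith

/-- Chain rule for continuous BV functions. -/
lemma IsD.chain {W : En n → ℝ} (hW : CC W) {h : ℝ → ℝ} (hh : ContDiff ℝ (⊤ : ℕ∞) h) {T T'}
    (hT : IsD i W T) (hT' : IsD i (fun x => h (W x)) T') {a : En n → ℝ} (ha : CC a) :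
    T' a = T (fun x => deriv h (W x) * a x) := by
  have hh' : ContDiff ℝ (⊤ : ℕ∞) (deriv h) := by
    exact ((contDiff_infty_iff_deriv).1 hh).2
  obtain ⟨B, hB0, hB⟩ := hW.bdd
  have hcomp : IsCompact (Icc (-(B+1)) (B+1)) := isCompact_Icc
  have hWc : ∀ x, W x ∈ Icc (-(B+1)) (B+1) := fun x => by
    have := abs_le.1 (hB x); constructor <;> linarith
  obtain ⟨D, hD⟩ := hcomp.exists_bound_of_continuousOn hh'.continuous.continuousOn
  have hdW : Continuous (fun x => deriv h (W x)) := hh'.continuous.comp hW.1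
  refine eq_of_smooth (T := T') (T' := fun a => T (fun x => deriv h (W x) * a x))
    (fun a b ha hb => hT'.sub ha hb) ?_ hT'.bdd (hT.bdd_mul hdW (fun x => hD _ (hWc x))) ?_ ha
  · intro a b ha hb
    simp only [mul_sub]
    exact hT.sub (ha.mul_left hdW) (hb.mul_left hdW)
  intro φ hφ
  obtain ⟨M, hM, hTb⟩ := hT.bdd
  obtain ⟨P, hP0, hP⟩ := hφ.cc.bdd
  set I := ∫ x, |pd i φ x| with hI
  have hI0 : 0 ≤ I := integral_nonneg fun x => abs_nonneg _
  have key : ∀ ε, 0 < ε → |T' φ - T (fun x => deriv h (W x) * φ x)| ≤ (I + M * (P + 1)) * ε := by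
    intro ε hε
    have huc := hcomp.uniformContinuousOn_of_continuous hh.continuous.continuousOn
    have huc' := hcomp.uniformContinuousOn_of_continuous hh'.continuous.continuousOn
    obtain ⟨δ1, hδ1, hu1⟩ := Metric.uniformContinuousOn_iff.1 huc ε hε
    obtain ⟨δ2, hδ2, hu2⟩ := Metric.uniformContinuousOn_iff.1 huc' ε hε
    set κ := min (min δ1 δ2) 1 / 2 with hκ
    have hκ0 : 0 < κ := by positivity
    have hκ1 : κ < δ1 := by
      have := min_le_left (min δ1 δ2) 1
      have := min_le_left δ1 δ2
      have : 0 < min (min δ1 δ2) 1 := by positivity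
      linarith
    have hκ2 : κ < δ2 := by
      have := min_le_left (min δ1 δ2) 1
      have := min_le_right δ1 δ2
      have : 0 < min (min δ1 δ2) 1 := by positivity
      linarith
    have hκ3 : κ < 1 := by
      have := min_le_right (min δ1 δ2) 1
      have : 0 < min (min δ1 δ2) 1 := by positivity
      linarith
    obtain ⟨δ3, hδ3, hu3⟩ := hW.unif hκ0
    set θ0 : En n → ℝ := fun x => deriv h (W x) * φ x with hθ0
    have hθ0c : CC θ0 := hφ.cc.mul_left hdW
    obtain ⟨δ4, hδ4, hu4⟩ := hθ0c.unif hε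
    obtain ⟨R, r1, r2, r3, r4, r5⟩ := exists_moll n (lt_min hδ3 hδ4)
    have hRW : ∀ x, |R W x - W x| ≤ κ := fun x =>
      r3 W hW x (W x) κ hκ0.le fun y hy => hu3 y x ((mem_ball.1 hy).trans_le (min_le_left _ _))
    have hRWc : ∀ x, R W x ∈ Icc (-(B+1)) (B+1) := fun x => by
      have h1 := abs_le.1 (hB x)
      have h2 := abs_le.1 (hRW x)
      constructor <;> linarith
    have hh1 : ∀ x, |h (R W x) - h (W x)| ≤ ε := fun x =>
      (hu1 _ (hRWc x) _ (hWc x) ((hRW x).trans_lt hκ1)).le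
    have hh2 : ∀ x, |deriv h (R W x) - deriv h (W x)| ≤ ε := fun x =>
      (hu2 _ (hRWc x) _ (hWc x) ((hRW x).trans_lt hκ2)).le
    have hRs : SC (R W) := r1 W hW
    set θ : En n → ℝ := fun x => deriv h (R W x) * φ x with hθ
    have hθs : SC θ := hφ.mul_left (hh'.comp hRs.1)
    have hRθ : ∀ x, |R θ x - θ0 x| ≤ (P + 1) * ε := by
      intro x
      refine r3 θ hθs.cc x (θ0 x) _ (by positivity) fun y hy => ?_
      have e1 : |θ y - θ0 y| ≤ P * ε := by
        simp only [hθ, hθ0, ← sub_mul, abs_mul]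
        rw [mul_comm P]
        exact mul_le_mul (hh2 y) (hP y) (abs_nonneg _) hε.le
      have e2 := hu4 y x ((mem_ball.1 hy).trans_le (min_le_right _ _))
      have := abs_sub_le (θ y) (θ0 y) (θ0 x)
      linarith
    have e1 : ∫ x, h (R W x) * pd i φ x = - T (R θ) := by
      rw [show ∫ x, h (R W x) * pd i φ x = _ from ibp (hh.comp hRs.1) hφ i, ← hT.repr _ (r1 θ hθs.cc), r5 θ hθs i,
        ← r4 _ _ hW (hθs.pd_cc i), ibp hRs.1 hθs i]
      congr 2
      ext x
      have : pd i (fun x => h (R W x)) x = deriv h (R W x) * pd i (R W) x := by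
        unfold pd
        have h1 : HasDerivAt h (deriv h (R W x)) (R W x) :=
          (hh.differentiable (by simp) _).hasDerivAt
        have h2 := h1.comp_hasFDerivAt x (hRs.diff x).hasFDerivAt
        have h3 := h2.fderiv
        rw [show (fun x => h (R W x)) = h ∘ R W from rfl, h3]
        simp
      change pd i (fun x => h (R W x)) x * φ x = _
      rw [this, hθ]; ring
    have e2 := hT'.repr φ hφ
    have e3 : |(∫ x, h (R W x) * pd i φ x) - ∫ x, h (W x) * pd i φ x| ≤ ε * I :=
      integral_close (hh.continuous.comp hRs.cc.1) (hh.continuous.comp hW.1) (hφ.pd_cc i) hh1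
    have e4 := hTb _ ((r1 θ hθs.cc).cc.sub hθ0c) _ (by positivity) hRθ
    rw [hT.sub (r1 θ hθs.cc).cc hθ0c] at e4
    rw [e1, e2] at e3
    have e5 : T' φ - T θ0 = (-T (R θ) - -T' φ) + (T (R θ) - T θ0) := by ring
    rw [e5]
    refine (abs_add_le _ _).trans ?_
    nlinarith
  by_contra hne
  have hpos := abs_pos.2 (sub_ne_zero.2 hne)
  set d := |T' φ - T (fun x => deriv h (W x) * φ x)| with hd
  have := key (d / (2 * (I + M * (P+1) + 1))) (by positivity)
  rw [mul_div_assoc', le_div_iff₀ (by positivity)] at this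
  nlinarith [mul_nonneg (mul_nonneg hM (by linarith : 0 ≤ P + 1)) hpos.le, mul_nonneg hI0 hpos.le]

lemma IsD.lin {W1 W2 : En n → ℝ} (h1 : CC W1) (h2 : CC W2) {T1 T2 T3}
    (hT1 : IsD i W1 T1) (hT2 : IsD i W2 T2) (hT3 : IsD i (fun x => W1 x + W2 x) T3)
    {a : En n → ℝ} (ha : CC a) : T3 a = T1 a + T2 a := by
  refine eq_of_smooth (T := T3) (T' := fun a => T1 a + T2 a)
    (fun a b ha hb => hT3.sub ha hb) ?_ hT3.bdd ?_ ?_ ha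
  · intro a b ha hb
    simp only [hT1.sub ha hb, hT2.sub ha hb]; ring
  · obtain ⟨M, hM, hb⟩ := hT1.bdd
    obtain ⟨M', hM', hb'⟩ := hT2.bdd
    refine ⟨M + M', by positivity, fun a ha δ hδ hle => ?_⟩
    have := hb a ha δ hδ hle
    have := hb' a ha δ hδ hle
    refine (abs_add_le _ _).trans ?_
    linarith
  · intro φ hφ
    have e := hT3.repr φ hφ
    simp only [add_mul] at e
    rw [integral_add ((hφ.pd_cc i).mul_left h1.1).integrable
      ((hφ.pd_cc i).mul_left h2.1).integrable, hT1.repr φ hφ, hT2.repr φ hφ] at e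
    linarith

/-- Product rule for continuous BV functions (the squares and the sum being BV as well). -/
lemma IsD.prod {U V : En n → ℝ} (hU : CC U) (hV : CC V) {TU TV TUV}
    (h1 : IsD i U TU) (h2 : IsD i V TV) (h3 : IsD i (fun x => U x * V x) TUV)
    (hs : ∃ T, IsD i (fun x => U x + V x) T) (hss : ∃ T, IsD i (fun x => (U x + V x) ^ 2) T)
    (hu : ∃ T, IsD i (fun x => (U x) ^ 2) T) (hv : ∃ T, IsD i (fun x => (V x) ^ 2) T)
    (hd : ∃ T, IsD i (fun x => (U x) ^ 2 + (V x) ^ 2) T)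
    {a : En n → ℝ} (ha : CC a) :
    TUV a = TU (fun x => V x * a x) + TV (fun x => U x * a x) := by
  obtain ⟨S, hS⟩ := hs
  obtain ⟨SS, hSS⟩ := hss
  obtain ⟨Qu, hQu⟩ := hu
  obtain ⟨Qv, hQv⟩ := hv
  obtain ⟨Qd, hQd⟩ := hd
  have sq : ContDiff ℝ (⊤ : ℕ∞) (fun t : ℝ => t ^ 2) := contDiff_id.pow 2
  have dsq : ∀ t : ℝ, deriv (fun t : ℝ => t ^ 2) t = 2 * t := fun t => by simp
  have c1 := IsD.chain (hU.add hV) sq hS hSS ha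
  have c2 := IsD.chain hU sq h1 hQu ha
  have c3 := IsD.chain hV sq h2 hQv ha
  simp only [dsq] at c1 c2 c3
  have sU : CC (fun x => (U x)^2) := by
    simp only [pow_two]; exact hU.mul_left hU.1
  have sV : CC (fun x => (V x)^2) := by
    simp only [pow_two]; exact hV.mul_left hV.1
  have sUV : CC (fun x => U x * V x) := hV.mul_left hU.1
  have c4 := IsD.lin sU sV hQu hQv hQd ha
  have c5 : SS a = Qd a + 2 * TUV a := by
    have h3' : IsD i (fun x => 2 * (U x * V x)) (fun a => 2 * TUV a) := by
      refine ⟨fun a b ha hb => ?_, fun c a ha => ?_, ?_, fun φ hφ => ?_⟩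
      · simp only [h3.add a b ha hb]; ring
      · simp only [h3.smul c a ha]; ring
      · obtain ⟨M, hM, hb⟩ := h3.bdd
        refine ⟨2 * M, by positivity, fun a ha δ hδ hle => ?_⟩
        have := hb a ha δ hδ hle
        rw [abs_mul, abs_of_pos (two_pos : (0:ℝ) < 2)]; linarith
      · have := h3.repr φ hφ
        simp only [mul_assoc, integral_const_mul] at this ⊢
        rw [this]; ring
    refine IsD.lin (sU.add sV) (sUV.smul 2) hQd h3' ?_ ha
    convert hSS using 2
    ring
  have aU : CC (fun x => U x * a x) := ha.mul_left hU.1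
  have aV : CC (fun x => V x * a x) := ha.mul_left hV.1
  have e1 : ∀ (T W), IsD i W T → T (fun x => 2 * (U x + V x) * a x)
      = 2 * (T (fun x => U x * a x) + T (fun x => V x * a x)) := by
    intro T W hT
    rw [← hT.add _ _ aU aV, ← hT.smul _ _ (aU.add aV)]
    congr 1; ext x; ring
  have e2 : TU (fun x => 2 * U x * a x) = 2 * TU (fun x => U x * a x) := by
    rw [← h1.smul _ _ aU]; congr 1; ext x; ring
  have e3 : TV (fun x => 2 * V x * a x) = 2 * TV (fun x => V x * a x) := by
    rw [← h2.smul _ _ aV]; congr 1; ext x; ring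
  have aS : CC (fun x => 2 * (U x + V x) * a x) :=
    ha.mul_left (continuous_const.mul (hU.1.add hV.1))
  have c6 := IsD.lin hU hV h1 h2 hS aS
  rw [e1 _ _ h1, e1 _ _ h2] at c6
  linarith

end isd


lemma polar {α : Type*} [MeasurableSpace α] (μ : Measure α) {ι : Type*} [Fintype ι]
    (H : α → ι → ℝ) (hH : Measurable H) :
    ∃ σ : α → ι → ℝ, Measurable σ ∧
      (∀ᵐ x ∂(μ.withDensity fun x => ENNReal.ofReal √(∑ i, H x i ^ 2)),
        √(∑ i, σ x i ^ 2) = 1) ∧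
      ∀ (φ : α → ℝ) (i : ι),
        ∫ x, φ x * σ x i ∂(μ.withDensity fun x => ENNReal.ofReal √(∑ i, H x i ^ 2))
          = ∫ x, φ x * H x i ∂μ := by
  set r : α → ℝ := fun x => √(∑ i, H x i ^ 2) with hr
  have hHi : ∀ i, Measurable fun x => H x i := fun i => (measurable_pi_apply i).comp hH
  have hrm : Measurable r := by
    apply Measurable.sqrt
    exact Finset.measurable_sum _ fun i _ => (hHi i).pow_const 2
  have hr0 : ∀ x, 0 ≤ r x := fun x => Real.sqrt_nonneg _
  refine ⟨fun x i => (r x)⁻¹ * H x i, ?_, ?_, ?_⟩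
  · exact measurable_pi_lambda _ fun i => hrm.inv.mul (hHi i)
  · rw [ae_withDensity_iff hrm.ennreal_ofReal]
    refine Eventually.of_forall fun x hx => ?_
    have hx' : 0 < r x := by
      have := ENNReal.ofReal_pos.1 (pos_iff_ne_zero.2 hx); exact this
    have : ∑ i, ((r x)⁻¹ * H x i) ^ 2 = 1 := by
      simp only [mul_pow, ← Finset.mul_sum]
      have h2 : r x ^ 2 = ∑ i, H x i ^ 2 :=
        Real.sq_sqrt (Finset.sum_nonneg fun i _ => sq_nonneg _)
      rw [← h2]; field_simp
    rw [this, Real.sqrt_one]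
  · intro φ i
    have : (fun x => ENNReal.ofReal (r x)) = fun x => ((r x).toNNReal : ℝ≥0∞) := rfl
    change ∫ x, φ x * ((r x)⁻¹ * H x i) ∂(μ.withDensity fun x => ((r x).toNNReal : ℝ≥0∞)) = _
    rw [integral_withDensity_eq_integral_smul hrm.real_toNNReal]
    congr 1; ext x
    rw [NNReal.smul_def, Real.coe_toNNReal _ (hr0 x), smul_eq_mul]
    by_cases h : r x = 0
    · have h2 : ∑ i, H x i ^ 2 = 0 :=
        (Real.sqrt_eq_zero (Finset.sum_nonneg fun i _ => sq_nonneg _)).1 h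
      have h3 := (Finset.sum_eq_zero_iff_of_nonneg fun i _ => sq_nonneg _).1 h2 i
        (Finset.mem_univ i)
      have h4 : H x i = 0 := by simpa using h3
      simp [h4]
    · field_simp

lemma sqrt_sum_le {ι : Type*} [Fintype ι] (H : ι → ℝ) : √(∑ i, H i ^ 2) ≤ ∑ i, |H i| := by
  rw [Real.sqrt_le_left (Finset.sum_nonneg fun i _ => abs_nonneg _)]
  calc ∑ i, H i ^ 2 = ∑ i, |H i| ^ 2 := by simp
    _ ≤ _ := Finset.sum_sq_le_sq_sum_of_nonneg fun i _ => abs_nonneg _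

/-- A function with integrable weak gradient is BV. -/
lemma memBVs_of_grad {n : ℕ} {Ω : Set (En n)} (hΩ : IsOpen Ω) {U : En n → ℝ}
    (hU : IntegrableOn U Ω) (G : Fin n → En n → ℝ) (hG : ∀ i, Integrable (G i))
    (h : ∀ φ : En n → ℝ, SmoothTest Ω φ → ∀ i : Fin n,
      ∫ x in Ω, U x * pd i φ x = - ∫ x in Ω, φ x * G i x) :
    ∃ ν, MemBVs Ω U ν := by
  set H : En n → Fin n → ℝ := fun x i => (hG i).1.mk (G i) x with hHdef
  have hHm : Measurable H :=
    measurable_pi_lambda _ fun i => (hG i).1.stronglyMeasurable_mk.measurable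
  have hHe : ∀ i, G i =ᵐ[volume] fun x => H x i := fun i => (hG i).1.ae_eq_mk
  obtain ⟨σ, hσ, h1, h2⟩ := polar (volume.restrict Ω) H hHm
  refine ⟨_, hU, ?_, σ, hσ, h1, ?_, fun φ hφ i => ?_⟩
  · have hIntg : Integrable (fun x => ∑ i, |H x i|) :=
      integrable_finsetSum _ fun i _ => ((hG i).congr (hHe i)).abs
    refine (measure_mono (subset_univ _)).trans_lt ?_
    rw [withDensity_apply _ MeasurableSet.univ, Measure.restrict_univ]
    refine (lintegral_mono fun x => ENNReal.ofReal_le_ofReal (sqrt_sum_le (H x))).trans_lt ?_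
    exact hIntg.integrableOn.lintegral_lt_top
  · apply withDensity_absolutelyContinuous
    rw [Measure.restrict_apply hΩ.measurableSet.compl]; simp
  · rw [h2 φ i]
    refine (h φ hφ i).trans ?_
    congr 1
    refine integral_congr_ae (ae_restrict_of_ae ?_)
    filter_upwards [hHe i] with x hx
    rw [hx]

section transport
variable {n : ℕ} {Ω₁ Ω₂ : Set (En n)} {f g : En n → En n}

lemma exists_cutoff {Ω K : Set (En n)} (hΩ : IsOpen Ω) (hK : IsCompact K) (hKΩ : K ⊆ Ω) :
    ∃ χ : En n → ℝ, SC χ ∧ tsupport χ ⊆ Ω ∧ (∀ x, 0 ≤ χ x ∧ χ x ≤ 1) ∧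
      ∃ V, IsOpen V ∧ K ⊆ V ∧ V ⊆ Ω ∧ ∀ x ∈ V, χ x = 1 := by
  obtain ⟨K', hK', h1, h2⟩ := exists_compact_between hK hΩ hKΩ
  obtain ⟨χ, c1, c2, c3⟩ := exists_contMDiffMap_one_nhds_of_subset_interior
    (modelWithCornersSelf ℝ (En n)) (n := (⊤ : ℕ∞)) hK.isClosed h1
  have hs : tsupport χ ⊆ K' := by
    refine closure_minimal (fun x hx => ?_) hK'.isClosed
    by_contra h
    exact hx (c2 x h)
  obtain ⟨V, hV, hKV, hV1⟩ := mem_nhdsSet_iff_exists.1 c1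
  refine ⟨χ, ⟨χ.contMDiff.contDiff, HasCompactSupport.of_support_subset_isCompact hK'
    ((subset_tsupport _).trans hs)⟩, hs.trans h2, fun x => c3 x, V ∩ Ω, hV.inter hΩ,
    subset_inter hKV hKΩ, inter_subset_right, fun x hx => hV1 hx.1⟩

/-- `u ∘ f` extended by zero outside `Ω₁`. -/
def pull (f : En n → En n) (Ω₁ : Set (En n)) (u : En n → ℝ) : En n → ℝ := Ω₁.indicator (u ∘ f)

lemma pull_zero (hf : IsHomeoOn f g Ω₁ Ω₂) (u : En n → ℝ) {x : En n}
    (hx : x ∉ g '' tsupport u) : pull f Ω₁ u x = 0 := by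
  by_cases h : x ∈ Ω₁
  · rw [pull, indicator_of_mem h]
    by_contra h0
    exact hx ⟨f x, subset_tsupport _ h0, hf.2.2.2.2.1 x h⟩
  · rw [pull, indicator_of_notMem h]

lemma pull_K (hf : IsHomeoOn f g Ω₁ Ω₂) {u : En n → ℝ} (hu : HasCompactSupport u)
    (hs : tsupport u ⊆ Ω₂) : IsCompact (g '' tsupport u) ∧ g '' tsupport u ⊆ Ω₁ := by
  refine ⟨hu.isCompact.image_of_continuousOn (hf.2.1.mono hs), ?_⟩
  rintro _ ⟨y, hy, rfl⟩
  exact hf.2.2.2.1 (hs hy)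

lemma pull_cc (hΩ₁ : IsOpen Ω₁) (hf : IsHomeoOn f g Ω₁ Ω₂) {u : En n → ℝ} (hu : CC u)
    (hs : tsupport u ⊆ Ω₂) : CC (pull f Ω₁ u) := by
  obtain ⟨hK, hK1⟩ := pull_K hf hu.2 hs
  refine ⟨continuous_iff_continuousAt.2 fun x => ?_, HasCompactSupport.intro hK
    fun x hx => pull_zero hf u hx⟩
  by_cases h : x ∈ Ω₁
  · have h1 : ContinuousAt (u ∘ f) x :=
      ContinuousAt.comp hu.1.continuousAt (hf.1.continuousAt (hΩ₁.mem_nhds h))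
    refine h1.congr ?_
    filter_upwards [hΩ₁.mem_nhds h] with y hy
    rw [pull, indicator_of_mem hy]
  · have h1 : (g '' tsupport u)ᶜ ∈ 𝓝 x := hK.isClosed.isOpen_compl.mem_nhds fun h' => h (hK1 h')
    refine (continuousAt_const (y := (0:ℝ))).congr ?_
    filter_upwards [h1] with y hy
    rw [pull_zero hf u hy]

lemma pull_loc (hΩ₁ : IsOpen Ω₁) (hf : IsHomeoOn f g Ω₁ Ω₂) {u : En n → ℝ} (hu : CC u)
    (hs : tsupport u ⊆ Ω₂) : ∃ χ : En n → ℝ, SC χ ∧ tsupport χ ⊆ Ω₁ ∧ (∀ x, 0 ≤ χ x ∧ χ x ≤ 1) ∧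
      ∀ (φ : En n → ℝ) (i : Fin n), ∫ x, pull f Ω₁ u x * pd i φ x
        = ∫ x in Ω₁, (u ∘ f) x * pd i (fun x => χ x * φ x) x := by
  obtain ⟨hK, hK1⟩ := pull_K hf hu.2 hs
  obtain ⟨χ, c1, c2, c3, V, hV, hKV, hVΩ, hV1⟩ := exists_cutoff hΩ₁ hK hK1
  refine ⟨χ, c1, c2, c3, fun φ i => ?_⟩
  rw [← integral_indicator hΩ₁.measurableSet]
  congr 1; ext x
  by_cases hx : x ∈ V
  · have e : (fun x => χ x * φ x) =ᶠ[𝓝 x] φ := by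
      filter_upwards [hV.mem_nhds hx] with y hy
      rw [hV1 y hy, one_mul]
    rw [indicator_of_mem (hVΩ hx), pull, indicator_of_mem (hVΩ hx)]
    unfold pd
    rw [e.fderiv_eq]
  · have h0 := pull_zero hf u (fun h => hx (hKV h))
    rw [h0]
    by_cases h1 : x ∈ Ω₁
    · rw [pull, indicator_of_mem h1] at h0
      rw [indicator_of_mem h1, h0]; simp
    · rw [indicator_of_notMem h1]; simp

lemma sigma_le {σ : Fin n → ℝ} (h : √(∑ i, σ i ^ 2) = 1) (i : Fin n) : |σ i| ≤ 1 := by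
  rw [← h, ← Real.sqrt_sq_eq_abs]
  exact Real.sqrt_le_sqrt (Finset.single_le_sum (f := fun i => σ i ^ 2)
    (fun i _ => sq_nonneg _) (Finset.mem_univ i))

lemma memBVs_finite {Ω : Set (En n)} {w : En n → ℝ} {ν : Measure (En n)} (h : MemBVs Ω w ν) :
    IsFiniteMeasure ν := by
  obtain ⟨-, h1, σ, -, -, h2, -⟩ := h
  refine ⟨?_⟩
  rw [← union_compl_self Ω]
  exact (measure_union_le _ _).trans_lt (by rw [h2, add_zero]; exact h1)

lemma memBVs_bound {Ω : Set (En n)} {w : En n → ℝ} {ν : Measure (En n)} (h : MemBVs Ω w ν)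
    (φ : En n → ℝ) (hφ : SmoothTest Ω φ) (h1 : ∀ x, |φ x| ≤ 1) (i : Fin n) :
    |∫ x in Ω, w x * pd i φ x| ≤ ν.real univ := by
  haveI := memBVs_finite h
  obtain ⟨-, -, σ, -, h3, -, h2⟩ := h
  have := h2 φ hφ i
  unfold pd
  rw [this, abs_neg, ← Real.norm_eq_abs, ← one_mul (ν.real univ)]
  refine norm_integral_le_of_norm_le_const ?_
  filter_upwards [h3] with x hx
  rw [norm_mul]
  exact mul_le_one₀ (h1 x) (norm_nonneg _) (sigma_le hx i)

lemma exists_isD (hΩ₁ : IsOpen Ω₁) (hf : IsHomeoOn f g Ω₁ Ω₂) {u : En n → ℝ} (hu : CC u)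
    (hs : tsupport u ⊆ Ω₂) {ν : Measure (En n)} (h : MemBVs Ω₁ (u ∘ f) ν) (i : Fin n) :
    ∃ T, IsD i (pull f Ω₁ u) T := by
  haveI := memBVs_finite h
  obtain ⟨χ, c1, c2, c3, c4⟩ := pull_loc hΩ₁ hf hu hs
  obtain ⟨-, -, σ, h4, h3, -, h2⟩ := h
  have hσm : Measurable fun x => σ x i := (measurable_pi_apply i).comp h4
  have hb : ∀ a : En n → ℝ, ∀ δ, 0 ≤ δ → (∀ x, |a x| ≤ δ) →
      ∀ᵐ x ∂ν, ‖χ x * a x * σ x i‖ ≤ δ := by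
    intro a δ hδ hle
    filter_upwards [h3] with x hx
    rw [norm_mul, norm_mul]
    have e1 : ‖χ x‖ ≤ 1 := by
      rw [Real.norm_eq_abs, abs_le]; exact ⟨by linarith [(c3 x).1], (c3 x).2⟩
    have e2 : ‖σ x i‖ ≤ 1 := sigma_le hx i
    have e3 : ‖a x‖ ≤ δ := hle x
    calc ‖χ x‖ * ‖a x‖ * ‖σ x i‖ ≤ 1 * δ * 1 := by gcongr
      _ = δ := by ring
  have hIntg : ∀ a : En n → ℝ, CC a → Integrable (fun x => χ x * a x * σ x i) ν := by
    intro a ha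
    obtain ⟨M, hM, hle⟩ := ha.bdd
    exact Integrable.of_bound ((c1.1.continuous.mul ha.1).measurable.mul hσm).aestronglyMeasurable
      M (hb a M hM hle)
  refine ⟨fun a => ∫ x, χ x * a x * σ x i ∂ν, ?_, ?_, ?_, ?_⟩
  · intro a b ha hb
    rw [← integral_add (hIntg a ha) (hIntg b hb)]
    congr 1; ext x; ring
  · intro c a ha
    rw [← integral_const_mul]
    congr 1; ext x; ring
  · refine ⟨ν.real univ, measureReal_nonneg, fun a ha δ hδ hle => ?_⟩
    rw [mul_comm]
    exact norm_integral_le_of_norm_le_const (hb a δ hδ hle)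
  · intro φ hφ
    rw [c4 φ i]
    exact h2 _ ⟨c1.1.mul hφ.1, c1.2.mul_right, (tsupport_mul_subset_left).trans c2⟩ i

end transport


lemma bs_l1 (b : ℕ → ℕ → ℝ) (hB : ∀ m, ∃ B, ∀ k, |b m k| ≤ B)
    (hp : ∀ a : ℕ → ℝ, Summable (fun k => |a k|) → ∃ C, ∀ m, |∑' k, a k * b m k| ≤ C) :
    ∃ C, ∀ m k, |b m k| ≤ C := by
  have hs : ∀ a : lp (fun _ : ℕ => ℝ) 1, Summable (fun k => |a k|) := by
    intro a
    have := (lp.memℓp a).summable (by simp)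
    simpa using this
  have hn : ∀ a : lp (fun _ : ℕ => ℝ) 1, ‖a‖ = ∑' k, |a k| := by
    intro a
    rw [lp.norm_eq_tsum_rpow (by simp)]
    simp
  choose B hB using hB
  have hs2 : ∀ m, ∀ a : lp (fun _ : ℕ => ℝ) 1, Summable (fun k => a k * b m k) := by
    intro m a
    refine Summable.of_norm_bounded ((hs a).mul_right (B m)) fun k => ?_
    rw [Real.norm_eq_abs, abs_mul]
    exact mul_le_mul_of_nonneg_left (hB m k) (abs_nonneg _)
  let T : ℕ → (lp (fun _ : ℕ => ℝ) 1 →L[ℝ] ℝ) := fun m =>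
    LinearMap.mkContinuous
      { toFun := fun a => ∑' k, a k * b m k
        map_add' := fun a a' => by
          rw [← (hs2 m a).tsum_add (hs2 m a')]
          congr 1; ext k; simp [add_mul]
        map_smul' := fun c a => by
          simp only [RingHom.id_apply, smul_eq_mul]
          rw [← tsum_mul_left]
          congr 1; ext k; simp [mul_assoc] } (B m) (fun a => by
        rw [hn, ← tsum_mul_left]
        refine tsum_of_norm_bounded ((hs a).mul_left (B m)).hasSum fun k => ?_
        rw [Real.norm_eq_abs, abs_mul, mul_comm]
        exact mul_le_mul_of_nonneg_right (hB m k) (abs_nonneg _))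
  have hTa : ∀ m a, T m a = ∑' k, a k * b m k := fun m a => rfl
  obtain ⟨C, hC⟩ := banach_steinhaus (g := T) fun a => hp a (hs a)
  refine ⟨C, fun m k => ?_⟩
  have h1 := (T m).le_of_opNorm_le (hC m) (lp.single 1 k 1)
  rw [lp.norm_single (by simp), hTa, tsum_eq_single k, lp.single_apply_self] at h1
  · simpa using h1
  · intro j hj
    rw [lp.single_apply_ne _ _ _ hj, zero_mul]

lemma integrable_tsum' {α : Type*} [MeasurableSpace α] {μ : Measure α} {F : ℕ → α → ℝ}
    (hF : ∀ k, Integrable (F k) μ) (hs : Summable fun k => ∫ x, |F k x| ∂μ) :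
    Integrable (fun x => ∑' k, F k x) μ := by
  have hfin : ∑' k, ∫⁻ x, ‖F k x‖ₑ ∂μ ≠ ∞ := by
    have e : ∀ k, ∫⁻ x, ‖F k x‖ₑ ∂μ = ENNReal.ofReal (∫ x, |F k x| ∂μ) := fun k =>
      (ofReal_integral_norm_eq_lintegral_enorm (hF k)).symm
    simp_rw [e]
    exact hs.tsum_ofReal_ne_top
  refine ⟨(AEMeasurable.tsum fun k => (hF k).1.aemeasurable).aestronglyMeasurable, ?_⟩
  refine (lintegral_mono fun x => enorm_tsum_le_tsum_enorm).trans_lt ?_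
  rw [lintegral_tsum fun k => (hF k).1.enorm]
  exact hfin.lt_top

section series
variable {n : ℕ} {Ω₁ Ω₂ : Set (En n)} {f g : En n → En n}

lemma series_czero (u : ℕ → En n → ℝ) (hu : ∀ k, SC (u k))
    (hs : ∀ k, tsupport (u k) ⊆ Ω₂) (h1 : ∀ k x, |u k x| ≤ 1)
    (a : ℕ → ℝ) (ha : Summable fun k => |a k|) :
    MemCZero Ω₂ (fun x => ∑' k, a k * u k x) := by
  have hb : ∀ k x, ‖a k * u k x‖ ≤ |a k| := fun k x => by
    rw [Real.norm_eq_abs, abs_mul]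
    exact mul_le_of_le_one_right (abs_nonneg _) (h1 k x)
  refine ⟨(continuous_tsum (fun k => continuous_const.mul (hu k).1.continuous) ha hb).continuousOn,
    fun ε hε => ?_⟩
  obtain ⟨N, hN⟩ := ((tendsto_sum_nat_add fun k => |a k|).eventually (gt_mem_nhds hε)).exists
  refine ⟨⋃ k ∈ Finset.range N, tsupport (u k), ?_, ?_, fun x hx => ?_⟩
  · exact (Finset.range N).isCompact_biUnion fun k _ => (hu k).2
  · exact iUnion₂_subset fun k _ => hs k
  · have hsum : Summable fun k => a k * u k x := Summable.of_norm_bounded ha fun k => hb k x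
    change |∑' k, a k * u k x| ≤ ε
    rw [← hsum.sum_add_tsum_nat_add N, Finset.sum_eq_zero, zero_add]
    · refine le_trans ?_ hN.le
      exact tsum_of_norm_bounded ((summable_nat_add_iff N).2 ha).hasSum fun k => hb _ x
    · intro k hk
      have : x ∉ tsupport (u k) := fun h => hx.2 (mem_biUnion hk h)
      rw [image_eq_zero_of_notMem_tsupport this, mul_zero]

lemma series_bv (hΩ₂ : IsOpen Ω₂) (u : ℕ → En n → ℝ) (hu : ∀ k, SC (u k))
    (h2 : ∀ k, ∫ x, |u k x| ≤ 1)
    (h3 : ∀ k i, ∫ x, |pd i (u k) x| ≤ 1) (a : ℕ → ℝ) (ha : Summable fun k => |a k|) :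
    ∃ ν, MemBVs Ω₂ (fun x => ∑' k, a k * u k x) ν := by
  have key : ∀ v : ℕ → En n → ℝ, (∀ k, CC (v k)) → (∀ k, ∫ x, |v k x| ≤ 1) →
      Summable (fun k => ∫ x, |a k * v k x|) := by
    intro v hv h
    refine Summable.of_nonneg_of_le (fun k => integral_nonneg fun x => abs_nonneg _)
      (fun k => ?_) ha
    simp_rw [abs_mul]
    rw [integral_const_mul]
    exact mul_le_of_le_one_right (abs_nonneg _) (h k)
  have keyφ : ∀ v : ℕ → En n → ℝ, (∀ k, CC (v k)) → (∀ k, ∫ x, |v k x| ≤ 1) →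
      ∀ φ, CC φ → ∫ x, (∑' k, a k * v k x) * φ x = ∑' k, a k * ∫ x, v k x * φ x := by
    intro v hv h φ hφ
    have hi : ∀ k, Integrable fun x => a k * v k x * φ x := fun k =>
      (((hv k).smul (a k)).mul_right hφ.1).integrable
    obtain ⟨M, hM, hφM⟩ := hφ.bdd
    have := (hasSum_integral_of_summable_integral_norm (μ := volume)
      (F := fun k x => a k * v k x * φ x) hi ?_).tsum_eq
    · simp_rw [tsum_mul_right] at this
      rw [← this]
      congr 1; ext k
      rw [← integral_const_mul]
      congr 1; ext x; ring
    · refine Summable.of_nonneg_of_le (fun k => integral_nonneg fun x => norm_nonneg _)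
        (fun k => ?_) ((key v hv h).mul_right M)
      rw [← integral_mul_const]
      refine integral_mono (hi k).norm (((hv k).smul (a k)).integrable.abs.mul_const M) fun x => ?_
      simp only [norm_mul, Real.norm_eq_abs, abs_mul]
      exact mul_le_mul_of_nonneg_left (hφM x) (by positivity)
  refine memBVs_of_grad hΩ₂ (integrable_tsum' (fun k => ((hu k).cc.smul (a k)).integrable)
    (key u (fun k => (hu k).cc) h2)).integrableOn
    (fun i x => ∑' k, a k * pd i (u k) x) (fun i => integrable_tsum'
      (fun k => (((hu k).pd_cc i).smul (a k)).integrable)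
      (key _ (fun k => (hu k).pd_cc i) fun k => h3 k i)) fun φ hφ i => ?_
  have hφ' : SC φ := ⟨hφ.1, hφ.2.1⟩
  have e1 : ∫ x in Ω₂, (∑' k, a k * u k x) * pd i φ x = ∫ x, (∑' k, a k * u k x) * pd i φ x := by
    refine setIntegral_eq_integral_of_forall_compl_eq_zero fun x hx => ?_
    rw [image_eq_zero_of_notMem_tsupport fun h => hx (hφ.2.2 (pd_supp i h)), mul_zero]
  have e2 : ∫ x in Ω₂, φ x * (∑' k, a k * pd i (u k) x)
      = ∫ x, (∑' k, a k * pd i (u k) x) * φ x := by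
    simp_rw [mul_comm (φ _)]
    refine setIntegral_eq_integral_of_forall_compl_eq_zero fun x hx => ?_
    rw [image_eq_zero_of_notMem_tsupport fun h => hx (hφ.2.2 h), mul_zero]
  rw [e1, e2, keyφ u (fun k => (hu k).cc) h2 _ (hφ'.pd_cc i),
    keyφ (fun k => pd i (u k)) (fun k => (hu k).pd_cc i) (fun k => h3 k i) _ hφ'.cc, ← tsum_neg]
  congr 1; ext k
  rw [ibp (hu k).1 hφ' i]; ring

/-- The three norms of `u` are at most `A`. -/
def Nb (u : En n → ℝ) (A : ℝ) : Prop :=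
  (∀ x, |u x| ≤ A) ∧ ∫ x, |u x| ≤ A ∧ ∀ i, ∫ x, |pd i u x| ≤ A

lemma unif1 (hΩ₁ : IsOpen Ω₁) (hΩ₂ : IsOpen Ω₂) (hf : IsHomeoOn f g Ω₁ Ω₂)
    (hT : ∀ u : En n → ℝ, MemCZero Ω₂ u → (∃ νu, MemBVs Ω₂ u νu) →
      ∃ νc, MemBVs Ω₁ (u ∘ f) νc) (i : Fin n) :
    ∃ C : ℝ, 0 ≤ C ∧ ∀ u, SC u → tsupport u ⊆ Ω₂ → Nb u 1 → ∀ φ, SC φ → (∀ x, |φ x| ≤ 1) →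
      |∫ x, pull f Ω₁ u x * pd i φ x| ≤ C := by
  by_contra hcon
  push Not at hcon
  choose u hu hs hN φ hφ hφ1 hbig using fun m : ℕ => hcon m (Nat.cast_nonneg m)
  choose χ c1 c2 c3 c4 using fun m => pull_loc hΩ₁ hf (hu m).cc (hs m)
  set θ : ℕ → En n → ℝ := fun m x => χ m x * φ m x with hθ
  have hθS : ∀ m, SC (θ m) := fun m => ⟨(c1 m).1.mul (hφ m).1, (c1 m).2.mul_right⟩
  have hθT : ∀ m, SmoothTest Ω₁ (θ m) := fun m =>
    ⟨(hθS m).1, (hθS m).2, (tsupport_mul_subset_left).trans (c2 m)⟩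
  have hθ1 : ∀ m x, |θ m x| ≤ 1 := fun m x => by
    rw [hθ]; simp only [abs_mul]
    refine mul_le_one₀ ?_ (abs_nonneg _) (hφ1 m x)
    rw [abs_of_nonneg (c3 m x).1]; exact (c3 m x).2
  set b : ℕ → ℕ → ℝ := fun m k => ∫ x in Ω₁, (u k ∘ f) x * pd i (θ m) x with hb
  have hIntg : ∀ m k, IntegrableOn (fun x => (u k ∘ f) x * pd i (θ m) x) Ω₁ := by
    intro m k
    refine ((hθS m).pd_cc i).integrable.integrableOn.bdd_mul (c := 1)
      (((hu k).1.continuous.comp_continuousOn hf.1).aestronglyMeasurable hΩ₁.measurableSet) ?_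
    exact Eventually.of_forall fun x => (hN k).1 _
  have hle : ∀ m k, ∫ x in Ω₁, |(u k ∘ f) x * pd i (θ m) x| ≤ ∫ x in Ω₁, |pd i (θ m) x| := by
    intro m k
    refine integral_mono (hIntg m k).abs ((hθS m).pd_cc i).integrable.integrableOn.abs fun x => ?_
    simp only [abs_mul]
    exact mul_le_of_le_one_left (abs_nonneg _) ((hN k).1 _)
  obtain ⟨C, hC⟩ := bs_l1 b (fun m => ⟨∫ x in Ω₁, |pd i (θ m) x|, fun k =>
    (abs_integral_le_integral_abs).trans (hle m k)⟩) (fun a ha => by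
      obtain ⟨ν, hν⟩ := hT _ (series_czero u hu hs (fun k => (hN k).1) a ha)
        (series_bv hΩ₂ u hu (fun k => (hN k).2.1) (fun k => (hN k).2.2) a ha)
      refine ⟨ν.real univ, fun m => ?_⟩
      refine le_of_eq_of_le ?_ (memBVs_bound hν (θ m) (hθT m) (hθ1 m) i)
      congr 1
      have := (hasSum_integral_of_summable_integral_norm (μ := volume.restrict Ω₁)
        (F := fun k x => a k * ((u k ∘ f) x * pd i (θ m) x))
        (fun k => (hIntg m k).const_mul _) ?_).tsum_eq
      · simp_rw [integral_const_mul] at this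
        rw [hb, this]
        congr 1; ext x
        simp_rw [← mul_assoc]
        rw [tsum_mul_right]; rfl
      · refine Summable.of_nonneg_of_le (fun k => integral_nonneg fun x => norm_nonneg _)
          (fun k => ?_) (ha.mul_right (∫ x in Ω₁, |pd i (θ m) x|))
        simp_rw [norm_mul (a k)]
        rw [integral_const_mul]
        exact mul_le_mul_of_nonneg_left (hle m k) (abs_nonneg _))
  obtain ⟨m, hm⟩ := exists_nat_gt C
  have h1 := hC m m
  have h2 := hbig m
  rw [c4 m (φ m) i] at h2
  have : |b m m| = |∫ x in Ω₁, (u m ∘ f) x * pd i (fun x => χ m x * φ m x) x| := rfl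
  linarith

lemma unif (hΩ₁ : IsOpen Ω₁) (hΩ₂ : IsOpen Ω₂) (hf : IsHomeoOn f g Ω₁ Ω₂)
    (hT : ∀ u : En n → ℝ, MemCZero Ω₂ u → (∃ νu, MemBVs Ω₂ u νu) →
      ∃ νc, MemBVs Ω₁ (u ∘ f) νc) :
    ∃ C : ℝ, 0 ≤ C ∧ ∀ i u, SC u → tsupport u ⊆ Ω₂ → ∀ A, Nb u A →
      ∀ φ, SC φ → (∀ x, |φ x| ≤ 1) → |∫ x, pull f Ω₁ u x * pd i φ x| ≤ C * A := by
  choose C hC0 hC using unif1 hΩ₁ hΩ₂ hf hT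
  refine ⟨∑ i, C i, Finset.sum_nonneg fun i _ => hC0 i, fun i u hu hs A hA φ hφ hφ1 => ?_⟩
  have hA0 : 0 ≤ A := (abs_nonneg _).trans (hA.1 0)
  rcases hA0.eq_or_lt with h0 | h0
  · have hu0 : ∀ x, u x = 0 := fun x => by
      have := hA.1 x; rw [← h0] at this; exact abs_nonpos_iff.1 this
    have hp : ∀ x, pull f Ω₁ u x = 0 := fun x => by
      unfold pull; by_cases h : x ∈ Ω₁ <;> simp [h, hu0]
    simp [hp, ← h0]
  · have hpd : ∀ i x, pd i (fun x => A⁻¹ * u x) x = A⁻¹ * pd i u x := fun i x => by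
      unfold pd
      rw [fderiv_const_mul hu.diff.differentiableAt]; simp
    have hAi : 0 < A⁻¹ := inv_pos.2 h0
    have h1 := hC i (fun x => A⁻¹ * u x) ⟨contDiff_const.mul hu.1, hu.2.mul_left⟩
      ((tsupport_mul_subset_right).trans hs) ⟨fun x => ?_, ?_, fun i' => ?_⟩ φ hφ hφ1
    · have e : ∀ x, pull f Ω₁ (fun x => A⁻¹ * u x) x * pd i φ x
          = A⁻¹ * (pull f Ω₁ u x * pd i φ x) := fun x => by
        unfold pull; by_cases h : x ∈ Ω₁ <;> simp [h, mul_assoc]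
      simp_rw [e] at h1
      rw [integral_const_mul, abs_mul, abs_of_pos hAi, inv_mul_le_iff₀ h0, mul_comm] at h1
      refine h1.trans (mul_le_mul_of_nonneg_right ?_ hA0)
      exact Finset.single_le_sum (fun i _ => hC0 i) (Finset.mem_univ i)
    · rw [abs_mul, abs_of_pos hAi, inv_mul_le_iff₀ h0, mul_one]; exact hA.1 x
    · simp_rw [abs_mul, abs_of_pos hAi]
      rw [integral_const_mul, inv_mul_le_iff₀ h0, mul_one]; exact hA.2.1
    · simp_rw [hpd, abs_mul, abs_of_pos hAi]
      rw [integral_const_mul, inv_mul_le_iff₀ h0, mul_one]; exact hA.2.2 i'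

lemma sc_isD (hΩ₁ : IsOpen Ω₁) (hΩ₂ : IsOpen Ω₂) (hf : IsHomeoOn f g Ω₁ Ω₂)
    (hT : ∀ u : En n → ℝ, MemCZero Ω₂ u → (∃ νu, MemBVs Ω₂ u νu) →
      ∃ νc, MemBVs Ω₁ (u ∘ f) νc) (i : Fin n) {u : En n → ℝ} (hu : SC u)
    (hs : tsupport u ⊆ Ω₂) : ∃ T, IsD i (pull f Ω₁ u) T := by
  obtain ⟨ν, hν⟩ := hT u ⟨hu.1.continuous.continuousOn, fun ε hε =>
    ⟨tsupport u, hu.2, hs, fun x hx => by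
      rw [image_eq_zero_of_notMem_tsupport hx.2, abs_zero]; exact hε.le⟩⟩
    (memBVs_of_grad hΩ₂ hu.cc.integrable.integrableOn (fun i => pd i u)
      (fun i => (hu.pd_cc i).integrable) fun φ hφ i => by
        rw [setIntegral_eq_integral_of_forall_compl_eq_zero fun x hx => ?_,
          setIntegral_eq_integral_of_forall_compl_eq_zero fun x hx => ?_,
          ibp hu.1 ⟨hφ.1, hφ.2.1⟩ i]
        · simp_rw [mul_comm]
        · rw [image_eq_zero_of_notMem_tsupport fun h => hx (hφ.2.2 h), zero_mul]
        · rw [image_eq_zero_of_notMem_tsupport fun h => hx (hs h), zero_mul])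
  exact exists_isD hΩ₁ hf hu.cc hs hν i

end series


section mainest
variable {n : ℕ} {Ω₁ Ω₂ : Set (En n)} {f g : En n → En n}

/-- Smooth functions with compact support in `Ω`. -/
def Ad (Ω : Set (En n)) (u : En n → ℝ) : Prop := SC u ∧ tsupport u ⊆ Ω

lemma Ad.mul {Ω : Set (En n)} {u v : En n → ℝ} (hu : Ad Ω u) (hv : Ad Ω v) :
    Ad Ω (fun x => u x * v x) :=
  ⟨hu.1.mul_right hv.1.1, (tsupport_mul_subset_left).trans hu.2⟩

lemma Ad.add {Ω : Set (En n)} {u v : En n → ℝ} (hu : Ad Ω u) (hv : Ad Ω v) :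
    Ad Ω (fun x => u x + v x) :=
  ⟨hu.1.add hv.1, (tsupport_add _ _).trans (union_subset hu.2 hv.2)⟩

lemma Ad.comp {Ω : Set (En n)} {u : En n → ℝ} (hu : Ad Ω u) {h : ℝ → ℝ}
    (hh : ContDiff ℝ (⊤ : ℕ∞) h) (h0 : h 0 = 0) : Ad Ω (fun x => h (u x)) :=
  ⟨⟨hh.comp hu.1.1, hu.1.2.comp_left h0⟩, (closure_mono (Function.support_comp_subset h0 u)).trans hu.2⟩

lemma pull_comp (u : En n → ℝ) {h : ℝ → ℝ} (h0 : h 0 = 0) :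
    pull f Ω₁ (fun x => h (u x)) = fun x => h (pull f Ω₁ u x) := by
  ext x; unfold pull; by_cases hx : x ∈ Ω₁ <;> simp [hx, h0]

lemma pull_mul (u v : En n → ℝ) :
    pull f Ω₁ (fun x => u x * v x) = fun x => pull f Ω₁ u x * pull f Ω₁ v x := by
  ext x; unfold pull; by_cases hx : x ∈ Ω₁ <;> simp [hx]

lemma pull_add (u v : En n → ℝ) :
    pull f Ω₁ (fun x => u x + v x) = fun x => pull f Ω₁ u x + pull f Ω₁ v x := by
  ext x; unfold pull; by_cases hx : x ∈ Ω₁ <;> simp [hx]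

lemma pull_abs_le {u : En n → ℝ} {A : ℝ} (hA : 0 ≤ A) (h : ∀ x, |u x| ≤ A) (x : En n) :
    |pull f Ω₁ u x| ≤ A := by
  unfold pull; by_cases hx : x ∈ Ω₁ <;> simp [hx, hA, h]

lemma nb_est {p η : En n → ℝ} {V : Set (En n)} (hp : SC p) (hη : SC η) (hηV : tsupport η ⊆ V)
    (hpV : ∀ y ∈ V, ∀ i, |pd i p y| ≤ 1) {h : ℝ → ℝ} (hh : ContDiff ℝ (⊤ : ℕ∞) h)
    {δ : ℝ} (hδ : 0 ≤ δ) (hb : ∀ t, |h t| ≤ δ) (hd : ∀ t, |deriv h t| ≤ 1) {B : ℝ}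
    (hB : ∀ x, |η x| ≤ B) :
    Nb (fun x => h (p x) * η x)
      ((∫ x, |η x|) + δ * (B + (∫ x, |η x|) + ∑ i, ∫ x, |pd i η x|)) := by
  have hB0 : 0 ≤ B := (abs_nonneg _).trans (hB 0)
  have hI0 : 0 ≤ ∫ x, |η x| := integral_nonneg fun x => abs_nonneg _
  have hJ0 : ∀ i, 0 ≤ ∫ x, |pd i η x| := fun i => integral_nonneg fun x => abs_nonneg _
  have hS0 : 0 ≤ ∑ i, ∫ x, |pd i η x| := Finset.sum_nonneg fun i _ => hJ0 i
  have hhp : ContDiff ℝ (⊤ : ℕ∞) (fun x => h (p x)) := hh.comp hp.1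
  refine ⟨fun x => ?_, ?_, fun i => ?_⟩
  · rw [abs_mul]
    calc |h (p x)| * |η x| ≤ δ * B := mul_le_mul (hb _) (hB x) (abs_nonneg _) hδ
      _ ≤ _ := by nlinarith [mul_nonneg hδ hI0, mul_nonneg hδ hS0]
  · calc ∫ x, |h (p x) * η x| ≤ ∫ x, δ * |η x| := by
          refine integral_mono (hη.cc.mul_left hhp.continuous).integrable.abs
            (hη.cc.integrable.abs.const_mul _) fun x => ?_
          simp only [abs_mul]
          exact mul_le_mul_of_nonneg_right (hb _) (abs_nonneg _)
      _ = δ * ∫ x, |η x| := integral_const_mul _ _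
      _ ≤ _ := by nlinarith [mul_nonneg hδ hB0, mul_nonneg hδ hS0]
  · have hpt : ∀ x, |pd i (fun x => h (p x) * η x) x| ≤ |η x| + δ * |pd i η x| := by
      intro x
      have e : pd i (fun x => h (p x) * η x) x
          = deriv h (p x) * pd i p x * η x + h (p x) * pd i η x := by
        have d1 : HasFDerivAt (fun x => h (p x)) (deriv h (p x) • fderiv ℝ p x) x :=
          ((hh.differentiable (by simp)).differentiableAt.hasDerivAt).comp_hasFDerivAt x
            hp.diff.differentiableAt.hasFDerivAt
        have d2 := d1.mul hη.diff.differentiableAt.hasFDerivAt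
        unfold pd
        have d3 : fderiv ℝ (fun x => h (p x) * η x) x = _ := d2.fderiv
        rw [d3]
        simp; ring
      rw [e]
      refine (abs_add_le _ _).trans (add_le_add ?_ ?_)
      · by_cases hx : x ∈ tsupport η
        · rw [abs_mul, abs_mul]
          refine mul_le_of_le_one_left (abs_nonneg _) ?_
          exact mul_le_one₀ (hd _) (abs_nonneg _) (hpV x (hηV hx) i)
        · rw [image_eq_zero_of_notMem_tsupport hx]; simp
      · rw [abs_mul]; exact mul_le_mul_of_nonneg_right (hb _) (abs_nonneg _)
    calc ∫ x, |pd i (fun x => h (p x) * η x) x| ≤ ∫ x, (|η x| + δ * |pd i η x|) := by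
          refine integral_mono ((hη.mul_left hhp).pd_cc i).integrable.abs
            (hη.cc.integrable.abs.add ((hη.pd_cc i).integrable.abs.const_mul _)) hpt
      _ = (∫ x, |η x|) + δ * ∫ x, |pd i η x| := by
          rw [integral_add hη.cc.integrable.abs ((hη.pd_cc i).integrable.abs.const_mul _),
            integral_const_mul]
      _ ≤ _ := by
          have := Finset.single_le_sum (f := fun i => ∫ x, |pd i η x|) (fun i _ => hJ0 i)
            (Finset.mem_univ i)
          nlinarith [mul_nonneg hδ hB0, mul_nonneg hδ hI0, mul_le_mul_of_nonneg_left this hδ]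

lemma step (hΩ₁ : IsOpen Ω₁) (hf : IsHomeoOn f g Ω₁ Ω₂) {i : Fin n}
    (hD : ∀ u, Ad Ω₂ u → ∃ T, IsD i (pull f Ω₁ u) T) {C : ℝ}
    (hC : ∀ u, Ad Ω₂ u → ∀ A, Nb u A →
      ∀ φ, SC φ → (∀ x, |φ x| ≤ 1) → |∫ x, pull f Ω₁ u x * pd i φ x| ≤ C * A)
    {p η ζ : En n → ℝ} {V : Set (En n)} (hp : Ad Ω₂ p) (hη : Ad Ω₂ η) (hζ : Ad Ω₂ ζ)
    (hζ1 : ∀ x, |ζ x| ≤ 1) (hζη : ∀ x, ζ x * η x = η x) (hηV : tsupport η ⊆ V)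
    (hpV : ∀ y ∈ V, ∀ i, |pd i p y| ≤ 1) {h : ℝ → ℝ} (hh : ContDiff ℝ (⊤ : ℕ∞) h)
    (h0 : h 0 = 0)
    {δ : ℝ} (hδ : 0 ≤ δ) (hb : ∀ t, |h t| ≤ δ) (hd : ∀ t, |deriv h t| ≤ 1) {B : ℝ}
    (hB : ∀ x, |η x| ≤ B) {Th Tη} (hTh : IsD i (fun x => h (pull f Ω₁ p x)) Th)
    (hTη : IsD i (pull f Ω₁ η) Tη) {M : ℝ}
    (hM : ∀ a, CC a → ∀ δ, 0 ≤ δ → (∀ x, |a x| ≤ δ) → |Tη a| ≤ M * δ)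
    {w : En n → ℝ} (hw : Continuous w) (hw1 : ∀ x, |w x| ≤ 1) :
    |Th (fun x => w x * pull f Ω₁ η x)| ≤
      C * ((∫ x, |η x|) + δ * (B + (∫ x, |η x|) + ∑ i, ∫ x, |pd i η x|)) + M * δ := by
  have hhp : Ad Ω₂ (fun x => h (p x)) := hp.comp hh h0
  have hU : CC (fun x => h (pull f Ω₁ p x)) := by
    rw [← pull_comp p h0]; exact pull_cc hΩ₁ hf hhp.1.cc hhp.2
  have hV : CC (pull f Ω₁ η) := pull_cc hΩ₁ hf hη.1.cc hη.2
  have hZ : CC (pull f Ω₁ ζ) := pull_cc hΩ₁ hf hζ.1.cc hζ.2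
  have hsq : ContDiff ℝ (⊤ : ℕ∞) (fun t : ℝ => t ^ 2) := contDiff_id.pow 2
  have hs0 : (fun t : ℝ => t ^ 2) 0 = 0 := by simp
  obtain ⟨TUV, hTUV⟩ := hD _ (hhp.mul hη)
  have a1 := hD _ (hhp.add hη)
  have a2 := hD _ ((hhp.add hη).comp hsq hs0)
  have a3 := hD _ (hhp.comp hsq hs0)
  have a4 := hD _ (hη.comp hsq hs0)
  have a5 := hD _ ((hhp.comp hsq hs0).add (hη.comp hsq hs0))
  rw [pull_comp (fun x => h (p x) + η x) (h := fun t : ℝ => t ^ 2) hs0] at a2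
  rw [pull_add, pull_comp (fun x => h (p x)) (h := fun t : ℝ => t ^ 2) hs0, pull_comp η (h := fun t : ℝ => t ^ 2) hs0] at a5
  rw [pull_comp (fun x => h (p x)) (h := fun t : ℝ => t ^ 2) hs0] at a3
  rw [pull_comp η (h := fun t : ℝ => t ^ 2) hs0] at a4
  have hprod := hTUV
  rw [pull_mul] at hprod
  rw [pull_add] at a1 a2
  rw [pull_comp p h0] at a1 a2 a3 a5 hprod
  have ha : CC (fun x => w x * pull f Ω₁ ζ x) := hZ.mul_left hw
  have key := IsD.prod hU hV hTh hTη hprod a1 a2 a3 a4 a5 ha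
  have hZE : ∀ x, pull f Ω₁ ζ x * pull f Ω₁ η x = pull f Ω₁ η x := fun x => by
    have := congrFun (pull_mul (f := f) (Ω₁ := Ω₁) ζ η) x
    rw [← this]; simp_rw [hζη]
  have e : (fun x => pull f Ω₁ η x * (w x * pull f Ω₁ ζ x)) = fun x => w x * pull f Ω₁ η x := by
    ext x; rw [← hZE x]
    calc _ = w x * (pull f Ω₁ ζ x * (pull f Ω₁ ζ x * pull f Ω₁ η x)) := by ring
      _ = _ := by rw [hZE, hZE]
  rw [e] at key
  have ha1 : ∀ x, |w x * pull f Ω₁ ζ x| ≤ 1 := fun x => by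
    rw [abs_mul]
    exact mul_le_one₀ (hw1 x) (abs_nonneg _) (pull_abs_le zero_le_one hζ1 x)
  have b1 := IsD.sharp hTUV (hC _ (hhp.mul hη) _
    (nb_est hp.1 hη.1 hηV hpV hh hδ hb hd hB)) ha one_pos ha1
  have b2 := hM (fun x => h (pull f Ω₁ p x) * (w x * pull f Ω₁ ζ x)) (ha.mul_left hU.1) δ hδ
    (fun x => by
      rw [abs_mul]
      calc _ ≤ δ * 1 := mul_le_mul (hb _) (ha1 x) (abs_nonneg _) hδ
        _ = δ := mul_one _)
  have : Th (fun x => w x * pull f Ω₁ η x) = TUV (fun x => w x * pull f Ω₁ ζ x)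
    - Tη (fun x => h (pull f Ω₁ p x) * (w x * pull f Ω₁ ζ x)) := by linarith
  rw [this]
  refine (abs_sub _ _).trans ?_
  linarith

lemma main_est (hΩ₁ : IsOpen Ω₁) (hf : IsHomeoOn f g Ω₁ Ω₂) {i : Fin n}
    (hD : ∀ u, Ad Ω₂ u → ∃ T, IsD i (pull f Ω₁ u) T) {C : ℝ}
    (hC : ∀ u, Ad Ω₂ u → ∀ A, Nb u A →
      ∀ φ, SC φ → (∀ x, |φ x| ≤ 1) → |∫ x, pull f Ω₁ u x * pd i φ x| ≤ C * A)
    {p η ζ : En n → ℝ} {V : Set (En n)} (hp : Ad Ω₂ p) (hη : Ad Ω₂ η) (hζ : Ad Ω₂ ζ)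
    (hζ1 : ∀ x, |ζ x| ≤ 1) (hζη : ∀ x, ζ x * η x = η x) (hηV : tsupport η ⊆ V)
    (hpV : ∀ y ∈ V, ∀ i, |pd i p y| ≤ 1) {Tp} (hTp : IsD i (pull f Ω₁ p) Tp) :
    |Tp (pull f Ω₁ η)| ≤ 2 * C * ∫ x, |η x| := by
  obtain ⟨Tη, hTη⟩ := hD η hη
  obtain ⟨M, hM0, hM⟩ := hTη.bdd
  obtain ⟨B, hB0, hB⟩ := hη.1.cc.bdd
  set I := ∫ x, |η x|
  set Q := B + I + ∑ i, ∫ x, |pd i η x| with hQ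
  have hP : CC (pull f Ω₁ p) := pull_cc hΩ₁ hf hp.1.cc hp.2
  have hE : CC (pull f Ω₁ η) := pull_cc hΩ₁ hf hη.1.cc hη.2
  have main : ∀ k : ℝ, 0 < k → |Tp (pull f Ω₁ η)| ≤ 2 * C * I + k⁻¹ * (4 * C * Q + 4 * M) := by
    intro k hk
    set s : ℝ → ℝ := fun t => Real.sin (k * t) * k⁻¹ with hs
    set c : ℝ → ℝ := fun t => (Real.cos (k * t) - 1) * k⁻¹ with hc
    have hkl : ContDiff ℝ (⊤ : ℕ∞) (fun t : ℝ => k * t) := contDiff_const.mul contDiff_id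
    have hsc : ContDiff ℝ (⊤ : ℕ∞) s := (Real.contDiff_sin.comp hkl).mul contDiff_const
    have hcc : ContDiff ℝ (⊤ : ℕ∞) c :=
      ((Real.contDiff_cos.comp hkl).sub contDiff_const).mul contDiff_const
    have hs0 : s 0 = 0 := by simp [hs]
    have hc0 : c 0 = 0 := by simp [hc]
    have hlin : ∀ t, HasDerivAt (fun t : ℝ => k * t) k t := fun t => by
      simpa using (hasDerivAt_id t).const_mul k
    have ds : ∀ t, deriv s t = Real.cos (k * t) := fun t => by
      have := ((hlin t).sin.mul_const k⁻¹).deriv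
      rw [this]; field_simp
    have dc : ∀ t, deriv c t = - Real.sin (k * t) := fun t => by
      have := (((hlin t).cos.sub_const 1).mul_const k⁻¹).deriv
      rw [this]; field_simp
    have hki : 0 < k⁻¹ := inv_pos.2 hk
    have bs : ∀ t, |s t| ≤ 2 * k⁻¹ := fun t => by
      rw [hs]; simp only [abs_mul, abs_of_pos hki]
      exact mul_le_mul_of_nonneg_right ((Real.abs_sin_le_one _).trans one_le_two) hki.le
    have bc : ∀ t, |c t| ≤ 2 * k⁻¹ := fun t => by
      rw [hc]; simp only [abs_mul, abs_of_pos hki]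
      refine mul_le_mul_of_nonneg_right ?_ hki.le
      rw [abs_le]; constructor <;> linarith [Real.neg_one_le_cos (k * t), Real.cos_le_one (k * t)]
    obtain ⟨Ts, hTs⟩ := hD _ (hp.comp hsc hs0)
    obtain ⟨Tc, hTc⟩ := hD _ (hp.comp hcc hc0)
    rw [pull_comp p hs0] at hTs
    rw [pull_comp p hc0] at hTc
    have hcosc : Continuous fun x => Real.cos (k * pull f Ω₁ p x) :=
      Real.continuous_cos.comp (continuous_const.mul hP.1)
    have hsinc : Continuous fun x => Real.sin (k * pull f Ω₁ p x) :=
      Real.continuous_sin.comp (continuous_const.mul hP.1)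
    have c1 := IsD.chain hP hsc hTp hTs (hE.mul_left hcosc)
    have c2 := IsD.chain hP hcc hTp hTc (hE.mul_left hsinc)
    simp only [ds, dc] at c1 c2
    have c3 : Tp (pull f Ω₁ η) = Ts (fun x => Real.cos (k * pull f Ω₁ p x) * pull f Ω₁ η x)
        - Tc (fun x => Real.sin (k * pull f Ω₁ p x) * pull f Ω₁ η x) := by
      have hsn : Continuous fun x => - Real.sin (k * pull f Ω₁ p x) := hsinc.neg
      rw [c1, c2, ← hTp.sub ((hE.mul_left hcosc).mul_left hcosc)
        ((hE.mul_left hsinc).mul_left hsn)]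
      congr 1; ext x
      linear_combination (-pull f Ω₁ η x) * Real.sin_sq_add_cos_sq (k * pull f Ω₁ p x)
    have d1 := step hΩ₁ hf hD hC hp hη hζ hζ1 hζη hηV hpV hsc hs0 (by positivity) bs
      (fun t => by rw [ds]; exact Real.abs_cos_le_one _) hB hTs hTη hM hcosc
      (fun x => Real.abs_cos_le_one _)
    have d2 := step hΩ₁ hf hD hC hp hη hζ hζ1 hζη hηV hpV hcc hc0 (by positivity) bc
      (fun t => by rw [dc, abs_neg]; exact Real.abs_sin_le_one _) hB hTc hTη hM hsinc
      (fun x => Real.abs_sin_le_one _)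
    rw [c3]
    refine (abs_sub _ _).trans ((add_le_add d1 d2).trans (le_of_eq ?_))
    ring
  have hlim : Tendsto (fun k : ℝ => 2 * C * I + k⁻¹ * (4 * C * Q + 4 * M)) atTop
      (𝓝 (2 * C * I + 0 * (4 * C * Q + 4 * M))) :=
    tendsto_const_nhds.add (tendsto_inv_atTop_zero.mul tendsto_const_nhds)
  rw [zero_mul, add_zero] at hlim
  exact ge_of_tendsto hlim ((eventually_gt_atTop 0).mono main)

end mainest


section sixth
variable {n : ℕ} {Ω₁ Ω₂ : Set (En n)} {f g : En n → En n}

lemma homeo_symm (hf : IsHomeoOn f g Ω₁ Ω₂) : IsHomeoOn g f Ω₂ Ω₁ :=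
  ⟨hf.2.1, hf.1, hf.2.2.2.1, hf.2.2.1, hf.2.2.2.2.2, hf.2.2.2.2.1⟩

lemma key_est (hΩ₁ : IsOpen Ω₁) (hΩ₂ : IsOpen Ω₂) (hf : IsHomeoOn f g Ω₁ Ω₂) {i : Fin n}
    (hD : ∀ u, Ad Ω₂ u → ∃ T, IsD i (pull f Ω₁ u) T) {C : ℝ} (hC0 : 0 ≤ C)
    (hC : ∀ u, Ad Ω₂ u → ∀ A, Nb u A →
      ∀ φ, SC φ → (∀ x, |φ x| ≤ 1) → |∫ x, pull f Ω₁ u x * pd i φ x| ≤ C * A)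
    (j : Fin n) (φ : En n → ℝ) (hφ : SmoothTest Ω₁ φ) :
    |∫ x in Ω₁, f x j * pd i φ x| ≤ 2 * C * ∫ y, |pull g Ω₂ φ y| := by
  have hφS : SC φ := ⟨hφ.1, hφ.2.1⟩
  have hg := homeo_symm hf
  set ψ := pull g Ω₂ φ with hψ
  have hψC : CC ψ := pull_cc hΩ₂ hg hφS.cc hφ.2.2
  obtain ⟨hS, hSΩ⟩ := pull_K hg hφ.2.1 hφ.2.2
  set S := f '' tsupport φ with hSdef
  have hψS : tsupport ψ ⊆ S := by
    refine closure_minimal (fun x hx => ?_) hS.isClosed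
    by_contra h
    exact hx (pull_zero hg φ h)
  obtain ⟨ζ, z1, z2, z3, V, hV, hSV, hVΩ, hζV⟩ := exists_cutoff hΩ₂ hS hSΩ
  obtain ⟨δ, hδ, hδV⟩ := hS.exists_cthickening_subset_open hV hSV
  have hζ : Ad Ω₂ ζ := ⟨z1, z2⟩
  have hcoord : ContDiff ℝ (⊤ : ℕ∞) (fun y : En n => y j) :=
    (EuclideanSpace.proj (𝕜 := ℝ) j : En n →L[ℝ] ℝ).contDiff
  have hp : Ad Ω₂ (fun y => ζ y * y j) :=
    ⟨z1.mul_right hcoord, (tsupport_mul_subset_left).trans z2⟩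
  have hpV : ∀ y ∈ V, ∀ i, |pd i (fun y => ζ y * y j) y| ≤ 1 := by
    intro y hy i'
    have e : (fun y => ζ y * y j) =ᶠ[𝓝 y] (EuclideanSpace.proj (𝕜 := ℝ) j : En n →L[ℝ] ℝ) := by
      filter_upwards [hV.mem_nhds hy] with z hz
      rw [hζV z hz, one_mul]; rfl
    unfold pd
    rw [e.fderiv_eq, ContinuousLinearMap.fderiv]
    change |(EuclideanSpace.single i' (1 : ℝ) : En n) j| ≤ 1
    rw [PiLp.single_apply]
    split_ifs <;> simp
  obtain ⟨Tp, hTp⟩ := hD _ hp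
  obtain ⟨M, hM0, hM⟩ := hTp.bdd
  have e1 : ∫ x in Ω₁, f x j * pd i φ x = - Tp φ := by
    rw [← hTp.repr φ hφS, ← integral_indicator hΩ₁.measurableSet]
    congr 1; ext x
    by_cases hx : x ∈ tsupport φ
    · have hx1 := hφ.2.2 hx
      rw [indicator_of_mem hx1]
      unfold pull
      rw [indicator_of_mem hx1, Function.comp_apply, hζV _ (hSV ⟨x, hx, rfl⟩), one_mul]
    · have h0 : pd i φ x = 0 := image_eq_zero_of_notMem_tsupport fun h => hx (pd_supp i h)
      rw [h0, mul_zero]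
      by_cases hx1 : x ∈ Ω₁ <;> simp [hx1, h0]
  rw [e1, abs_neg]
  set v := volume.real (cthickening δ S) with hv
  have hS' : IsCompact (cthickening δ S) := hS.cthickening
  have main : ∀ ε : ℝ, 0 < ε → ε ≤ δ →
      |Tp φ| ≤ 2 * C * (∫ y, |ψ y|) + ε * (M + 2 * C * v) := by
    intro ε hε hεδ
    obtain ⟨η, h1, h2, h3, -⟩ := exists_smooth_approx hψC hε
    have h4 : tsupport η ⊆ cthickening δ S :=
      h3.trans ((cthickening_mono hεδ _).trans (cthickening_subset_of_subset _ hψS))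
    have h5 : tsupport η ⊆ V := h4.trans hδV
    have hη : Ad Ω₂ η := ⟨h1, h5.trans hVΩ⟩
    have h6 := main_est hΩ₁ hf hD hC hp hη hζ
      (fun x => by rw [abs_of_nonneg (z3 x).1]; exact (z3 x).2)
      (fun x => by
        by_cases hx : x ∈ V
        · rw [hζV x hx, one_mul]
        · rw [image_eq_zero_of_notMem_tsupport fun h => hx (h5 h), mul_zero]) h5 hpV hTp
    have h7 : ∀ x, |φ x - pull f Ω₁ η x| ≤ ε := by
      intro x
      by_cases hx : x ∈ Ω₁
      · have : φ x = ψ (f x) := by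
          rw [hψ]; unfold pull
          rw [indicator_of_mem (hf.2.2.1 hx), Function.comp_apply, hf.2.2.2.2.1 x hx]
        unfold pull
        rw [indicator_of_mem hx, this, abs_sub_comm]
        exact h2 _
      · unfold pull
        rw [indicator_of_notMem hx, image_eq_zero_of_notMem_tsupport fun h => hx (hφ.2.2 h)]
        simpa using hε.le
    have hE : CC (pull f Ω₁ η) := pull_cc hΩ₁ hf hη.1.cc hη.2
    have h8 := hM _ (hφS.cc.sub hE) ε hε.le h7
    rw [hTp.sub hφS.cc hE] at h8
    have h9 : ∫ y, |η y| ≤ (∫ y, |ψ y|) + ε * v := by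
      have hind : Integrable ((cthickening δ S).indicator fun _ : En n => ε) :=
        (integrable_indicator_iff hS'.measurableSet).2
          (integrableOn_const hS'.measure_lt_top.ne)
      have : ∫ y, (|ψ y| + (cthickening δ S).indicator (fun _ => ε) y) = (∫ y, |ψ y|) + ε * v := by
        rw [integral_add hψC.integrable.abs hind, integral_indicator hS'.measurableSet,
          setIntegral_const, smul_eq_mul, mul_comm]
      rw [← this]
      refine integral_mono h1.cc.integrable.abs (hψC.integrable.abs.add hind) fun y => ?_
      by_cases hy : y ∈ cthickening δ S
      · simp only [indicator_of_mem hy]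
        have := abs_add_le (η y - ψ y) (ψ y)
        rw [sub_add_cancel] at this
        linarith [h2 y]
      · simp only [indicator_of_notMem hy, add_zero]
        rw [image_eq_zero_of_notMem_tsupport fun h => hy (h4 h), abs_zero]
        exact abs_nonneg _
    have h10 := abs_add_le (Tp φ - Tp (pull f Ω₁ η)) (Tp (pull f Ω₁ η))
    rw [sub_add_cancel] at h10
    have h11 := mul_le_mul_of_nonneg_left h9 (mul_nonneg zero_le_two hC0)
    nlinarith
  have hlim : Tendsto (fun ε : ℝ => 2 * C * (∫ y, |ψ y|) + ε * (M + 2 * C * v)) (𝓝[>] 0)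
      (𝓝 (2 * C * (∫ y, |ψ y|) + 0 * (M + 2 * C * v))) :=
    (tendsto_const_nhds.add (tendsto_id.mul tendsto_const_nhds)).mono_left nhdsWithin_le_nhds
  rw [zero_mul, add_zero] at hlim
  refine ge_of_tendsto hlim ?_
  filter_upwards [Ioc_mem_nhdsGT hδ] with ε hε
  exact main ε hε.1 hε.2

end sixth


/-- A linear functional dominated by an `L¹` norm is represented by a bounded function. -/
lemma repr_bdd {α : Type*} [MeasurableSpace α] (μ : Measure α) [SigmaFinite μ]
    {V : Type*} [AddCommGroup V] [Module ℝ V] (w : α → ℝ) (hw : MemLp w 2 μ)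
    (hwm : Measurable w) (hw0 : ∀ x, 0 < w x) (A : V →ₗ[ℝ] (α → ℝ))
    (hA1 : ∀ φ, Integrable (A φ) μ) (hA2 : ∀ φ, MemLp (fun x => A φ x / w x) 2 μ)
    (L : V →ₗ[ℝ] ℝ) (K : ℝ) (hK : 0 ≤ K) (hL : ∀ φ, |L φ| ≤ K * ∫ x, |A φ x| ∂μ) :
    ∃ h : α → ℝ, Measurable h ∧ (∀ x, |h x| ≤ K) ∧ ∀ φ, L φ = ∫ x, A φ x * h x ∂μ := by
  let Λ : V →ₗ[ℝ] Lp ℝ 1 μ :=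
    { toFun := fun φ => (hA1 φ).toL1 (A φ)
      map_add' := fun φ ψ => by
        rw [← Integrable.toL1_add, Integrable.toL1_eq_toL1_iff, map_add]
      map_smul' := fun c φ => by
        rw [RingHom.id_apply, ← Integrable.toL1_smul, Integrable.toL1_eq_toL1_iff, map_smul]
        rfl }
  have hΛ : ∀ φ, ‖Λ φ‖ = ∫ x, |A φ x| ∂μ := fun φ => L1.norm_of_fun_eq_integral_norm (hA1 φ)
  have hker : Λ.ker ≤ L.ker := by
    intro φ hφ
    rw [LinearMap.mem_ker] at hφ ⊢
    have h1 := hL φ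
    rw [← hΛ, hφ, norm_zero, mul_zero] at h1
    exact abs_nonpos_iff.1 h1
  let L0 : Λ.range →ₗ[ℝ] ℝ := (Λ.ker.liftQ L hker).comp Λ.quotKerEquivRange.symm.toLinearMap
  have hL0 : ∀ φ, L0 ⟨Λ φ, LinearMap.mem_range_self Λ φ⟩ = L φ := by
    intro φ
    change (Λ.ker.liftQ L hker) (Λ.quotKerEquivRange.symm ⟨Λ φ, _⟩) = L φ
    rw [LinearMap.quotKerEquivRange_symm_apply_image]
    rfl
  have hL0b : ∀ x, ‖L0 x‖ ≤ K * ‖x‖ := by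
    rintro ⟨_, φ, rfl⟩
    rw [hL0]
    refine (hL φ).trans ?_
    rw [← hΛ]; rfl
  obtain ⟨Lt, ht1, ht2⟩ := exists_extension_norm_eq Λ.range (L0.mkContinuous K hL0b)
  have ht3 : ‖Lt‖ ≤ K := ht2 ▸ L0.mkContinuous_norm_le hK hL0b
  have ht4 : ∀ φ, Lt (Λ φ) = L φ := fun φ => by
    have := ht1 ⟨Λ φ, LinearMap.mem_range_self Λ φ⟩
    rw [LinearMap.mkContinuous_apply, hL0] at this
    exact this
  let m : Lp ℝ 2 μ →L[ℝ] Lp ℝ 1 μ := (ContinuousLinearMap.mul ℝ ℝ).holderL μ 2 2 1 (hw.toLp w)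
  let h0 : Lp ℝ 2 μ := (InnerProductSpace.toDual ℝ _).symm (Lt.comp m)
  have hm : ∀ (v : α → ℝ) (hv : MemLp v 2 μ) (hi : Integrable (fun x => w x * v x) μ),
      Lt (hi.toL1 _) = ∫ x, h0 x * v x ∂μ := by
    intro v hv hi
    have e1 : inner ℝ h0 (hv.toLp v) = Lt (m (hv.toLp v)) :=
      InnerProductSpace.toDual_symm_apply
    have e2 : m (hv.toLp v) = hi.toL1 _ := by
      apply Lp.ext
      refine ((ContinuousLinearMap.mul ℝ ℝ).coeFn_holder (r := 1) (hw.toLp w) (hv.toLp v)).trans ?_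
      filter_upwards [hw.coeFn_toLp, hv.coeFn_toLp, hi.coeFn_toL1] with x a1 a2 a3
      rw [a1, a2, a3]; rfl
    rw [← e2, ← e1, L2.inner_def]
    refine integral_congr_ae ?_
    filter_upwards [hv.coeFn_toLp] with x a
    rw [a]; simp [mul_comm]
  have hh0 : MemLp h0 2 μ := Lp.memLp h0
  have hloc : ∀ {v : α → ℝ}, MemLp v 2 μ → ∀ s, μ s < ∞ → IntegrableOn v s μ := by
    intro v hv s hs
    have : IsFiniteMeasure (μ.restrict s) := ⟨by simpa using hs⟩
    exact (hv.restrict s).integrable (by norm_num)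
  have hset : ∀ s, MeasurableSet s → μ s < ∞ → |∫ x in s, h0 x ∂μ| ≤ K * ∫ x in s, w x ∂μ := by
    intro s hs hμs
    have hv : MemLp (s.indicator fun _ => (1 : ℝ)) 2 μ :=
      memLp_indicator_const 2 hs 1 (Or.inr hμs.ne)
    have hwi : (fun x => w x * s.indicator (fun _ => (1 : ℝ)) x) = s.indicator w := by
      ext x; by_cases h : x ∈ s <;> simp [h]
    have hi : Integrable (fun x => w x * s.indicator (fun _ => (1 : ℝ)) x) μ := by
      rw [hwi]; exact (integrable_indicator_iff hs).2 (hloc hw s hμs)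
    have h1 := hm _ hv hi
    have h2 : (fun x => h0 x * s.indicator (fun _ => (1 : ℝ)) x) = s.indicator h0 := by
      ext x; by_cases h : x ∈ s <;> simp [h]
    rw [h2, integral_indicator hs] at h1
    rw [← h1]
    refine (Lt.le_of_opNorm_le ht3 _).trans (mul_le_mul_of_nonneg_left (le_of_eq ?_) hK)
    rw [L1.norm_of_fun_eq_integral_norm, ← integral_indicator hs]
    congr 1; ext x
    by_cases h : x ∈ s
    · simp [h, abs_of_pos (hw0 x)]
    · simp [h]
  have b1 : 0 ≤ᵐ[μ] fun x => K * w x - h0 x := by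
    refine ae_nonneg_of_forall_setIntegral_nonneg_of_sigmaFinite
      (fun s _ hs => ((hloc hw s hs).const_mul K).sub (hloc hh0 s hs)) fun s hms hs => ?_
    rw [integral_sub ((hloc hw s hs).const_mul K) (hloc hh0 s hs), integral_const_mul]
    linarith [(abs_le.1 (hset s hms hs)).2]
  have b2 : 0 ≤ᵐ[μ] fun x => K * w x + h0 x := by
    refine ae_nonneg_of_forall_setIntegral_nonneg_of_sigmaFinite
      (fun s _ hs => ((hloc hw s hs).const_mul K).add (hloc hh0 s hs)) fun s hms hs => ?_
    rw [integral_add ((hloc hw s hs).const_mul K) (hloc hh0 s hs), integral_const_mul]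
    linarith [(abs_le.1 (hset s hms hs)).1]
  set hk : α → ℝ := hh0.1.mk h0 with hhk
  refine ⟨fun x => max (-K) (min K (hk x / w x)), ?_, fun x => ?_, fun φ => ?_⟩
  · exact measurable_const.max (measurable_const.min
      (hh0.1.stronglyMeasurable_mk.measurable.div hwm))
  · rw [abs_le]
    exact ⟨le_max_left _ _, max_le (by linarith) (min_le_left _ _)⟩
  · have e : (fun x => w x * (A φ x / w x)) = A φ := by
      ext x; have := (hw0 x).ne'; field_simp
    have hi : Integrable (fun x => w x * (A φ x / w x)) μ := by rw [e]; exact hA1 φ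
    have h1 := hm _ (hA2 φ) hi
    have h2 : hi.toL1 _ = Λ φ :=
      (Integrable.toL1_eq_toL1_iff _ _ hi (hA1 φ)).2 (by rw [e])
    rw [← ht4, ← h2, h1]
    refine integral_congr_ae ?_
    filter_upwards [b1, b2, hh0.1.ae_eq_mk] with x c1 c2 c3
    have hx := hw0 x
    have c1' : h0 x ≤ K * w x := by simpa using c1
    have c2' : -(K * w x) ≤ h0 x := by have : 0 ≤ K * w x + h0 x := c2; linarith
    have c4 : hk x = h0 x := c3.symm
    rw [c4, min_eq_right ((div_le_iff₀ hx).2 c1'), max_eq_right ((le_div_iff₀ hx).2 (by linarith))]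
    field_simp

section seventh
variable {n : ℕ} {Ω₁ Ω₂ : Set (En n)} {f g : En n → En n}

/-- The space of test functions. -/
def testSub (Ω : Set (En n)) : Submodule ℝ (En n → ℝ) where
  carrier := {φ | SmoothTest Ω φ}
  add_mem' := fun {a b} ha hb => ⟨ha.1.add hb.1, ha.2.1.add hb.2.1,
    (tsupport_add _ _).trans (union_subset ha.2.2 hb.2.2)⟩
  zero_mem' := ⟨contDiff_const, HasCompactSupport.zero, by
    have : tsupport (0 : En n → ℝ) = ∅ := by simp
    rw [this]; exact empty_subset _⟩
  smul_mem' := fun c a ha => ⟨contDiff_const.mul ha.1, ha.2.1.mul_left,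
    (tsupport_mul_subset_right).trans ha.2.2⟩

lemma exists_h (hΩ₁ : IsOpen Ω₁) (hΩ₂ : IsOpen Ω₂) (hf : IsHomeoOn f g Ω₁ Ω₂) (i j : Fin n)
    {K : ℝ} (hK : 0 ≤ K)
    (hkey : ∀ φ : En n → ℝ, SmoothTest Ω₁ φ →
      |∫ x in Ω₁, f x j * pd i φ x| ≤ K * ∫ y, |pull g Ω₂ φ y|) :
    ∃ h : En n → ℝ, Measurable h ∧ (∀ y, |h y| ≤ K) ∧ ∀ φ, SmoothTest Ω₁ φ →
      ∫ x in Ω₁, f x j * pd i φ x = - ∫ y, pull g Ω₂ φ y * h y := by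
  set r : ℝ := n + 1 with hr
  set w : En n → ℝ := fun y => (1 + ‖y‖) ^ (-r) with hw
  have hpos : ∀ y : En n, 0 < 1 + ‖y‖ := fun y => by positivity
  have hw0 : ∀ y, 0 < w y := fun y => Real.rpow_pos_of_pos (hpos y) _
  have hwc : Continuous w := by
    refine Continuous.rpow_const (by fun_prop) fun y => Or.inl (hpos y).ne'
  have hw2 : MemLp w 2 volume := by
    rw [memLp_two_iff_integrable_sq hwc.aestronglyMeasurable]
    have := integrable_one_add_norm (E := En n) (μ := volume) (r := r + r) (by
      simp only [finrank_euclideanSpace, Fintype.card_fin]; rw [hr]; linarith [Nat.cast_nonneg (α := ℝ) n])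
    refine this.congr (Eventually.of_forall fun y => ?_)
    simp only [hw]
    rw [sq, ← Real.rpow_add (hpos y)]; congr 1; ring
  have hcc : ∀ φ : testSub Ω₁, CC (pull g Ω₂ φ) := fun φ =>
    pull_cc hΩ₂ (homeo_symm hf) ⟨φ.2.1.continuous, φ.2.2.1⟩ φ.2.2.2
  have hIntg : ∀ φ : testSub Ω₁, IntegrableOn (fun x => f x j * pd i φ x) Ω₁ := by
    intro φ
    have hS : SC (φ : En n → ℝ) := ⟨φ.2.1, φ.2.2.1⟩
    have hts : tsupport (φ : En n → ℝ) ⊆ Ω₁ := φ.2.2.2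
    have hfj : ContinuousOn (fun x => f x j) Ω₁ :=
      (EuclideanSpace.proj (𝕜 := ℝ) j : En n →L[ℝ] ℝ).continuous.comp_continuousOn hf.1
    have h1 : IntegrableOn (fun x => f x j * pd i φ x) (tsupport (φ : En n → ℝ)) :=
      ((hfj.mono hts).mul (pd_cont hS.1 i).continuousOn).integrableOn_compact hS.2
    refine (integrableOn_iff_integrable_of_support_subset ?_).1 h1 |>.integrableOn
    intro x hx
    refine pd_supp i (subset_tsupport _ fun h => hx ?_)
    simp only [h, mul_zero]
  let A : testSub Ω₁ →ₗ[ℝ] (En n → ℝ) :=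
    { toFun := fun φ => pull g Ω₂ φ
      map_add' := fun φ ψ => pull_add _ _
      map_smul' := fun c φ => by
        ext y; simp only [pull]; by_cases hy : y ∈ Ω₂ <;> simp [hy] }
  let L : testSub Ω₁ →ₗ[ℝ] ℝ :=
    { toFun := fun φ => - ∫ x in Ω₁, f x j * pd i φ x
      map_add' := fun φ ψ => by
        rw [← neg_add, ← integral_add (hIntg φ) (hIntg ψ)]
        congr 2; ext x
        have : pd i (φ + ψ : testSub Ω₁) x = pd i φ x + pd i ψ x := by
          unfold pd
          rw [Submodule.coe_add, fderiv_add (φ.2.1.differentiable (by simp)).differentiableAt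
            (ψ.2.1.differentiable (by simp)).differentiableAt]; rfl
        rw [this]; ring
      map_smul' := fun c φ => by
        rw [RingHom.id_apply, smul_eq_mul, mul_neg, ← integral_const_mul]
        congr 2; ext x
        have : pd i (c • φ : testSub Ω₁) x = c * pd i φ x := by
          unfold pd
          rw [Submodule.coe_smul, fderiv_const_smul
            (φ.2.1.differentiable (by simp)).differentiableAt]; rfl
        rw [this]; ring }
  have hA2 : ∀ φ, MemLp (fun y => A φ y / w y) 2 volume := by
    intro φ
    have : CC (fun y => pull g Ω₂ φ y * (w y)⁻¹) :=
      (hcc φ).mul_right (hwc.inv₀ fun y => (hw0 y).ne')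
    exact this.1.memLp_of_hasCompactSupport this.2
  have hLb : ∀ φ, |L φ| ≤ K * ∫ y, |A φ y| := by
    intro φ
    change |- ∫ x in Ω₁, f x j * pd i φ x| ≤ _
    rw [abs_neg]; exact hkey φ φ.2
  obtain ⟨h, h1, h2, h3⟩ := repr_bdd volume w hw2 hwc.measurable hw0 A
    (fun φ => (hcc φ).integrable) hA2 L K hK hLb
  refine ⟨h, h1, h2, fun φ hφ => ?_⟩
  have := h3 ⟨φ, hφ⟩
  change - ∫ x in Ω₁, f x j * pd i φ x = ∫ y, pull g Ω₂ φ y * h y at this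
  linarith

end seventh


lemma final_step {n : ℕ} (Ω₁ Ω₂ : Set (En n)) (hΩ₁ : IsOpen Ω₁) (hΩ₂ : IsOpen Ω₂)
    (f g : En n → En n) (hf : IsHomeoOn f g Ω₁ Ω₂) {K : ℝ} (hK : 0 ≤ K)
    (h : Fin n → Fin n → En n → ℝ) (hm : ∀ j i, Measurable (h j i))
    (hb : ∀ j i y, |h j i y| ≤ K)
    (hr : ∀ j i φ, SmoothTest Ω₁ φ →
      ∫ x in Ω₁, f x j * pd i φ x = - ∫ y, pull g Ω₂ φ y * h j i y) :
    ∃ νf : Measure (En n), MemBVloc Ω₁ f νf ∧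
      ∃ K : ℝ, 0 < K ∧ ∀ A : Set (En n), A ⊆ Ω₂ → MeasurableSet A →
        νf (f ⁻¹' A ∩ Ω₁) ≤ ENNReal.ofReal K * volume A := by
  classical
  obtain ⟨hfc, hgc, hf12, hg21, hgf, hfg⟩ := hf
  set μ : Measure (En n) := Measure.map g (volume.restrict Ω₂) with hμ
  have hgm : AEMeasurable g (volume.restrict Ω₂) := hgc.aemeasurable hΩ₂.measurableSet
  set F : En n → En n := Ω₁.piecewise f (fun _ => 0) with hF
  have hFm : Measurable F := hfc.measurable_piecewise continuousOn_const hΩ₁.measurableSet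
  have hFf : ∀ x ∈ Ω₁, F x = f x := fun x hx => piecewise_eq_of_mem _ _ _ hx
  set H : En n → Fin n × Fin n → ℝ := fun x q => Ω₁.indicator (fun x => h q.1 q.2 (F x)) x with hH
  have hHm : Measurable H := measurable_pi_lambda _ fun q =>
    ((hm q.1 q.2).comp hFm).indicator hΩ₁.measurableSet
  have hHg : ∀ y ∈ Ω₂, ∀ q : Fin n × Fin n, H (g y) q = h q.1 q.2 y := by
    intro y hy q
    simp only [hH]
    rw [indicator_of_mem (hg21 hy), hFf _ (hg21 hy), hfg y hy]
  have hHb : ∀ x q, |H x q| ≤ K := by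
    intro x q
    simp only [hH]
    by_cases hx : x ∈ Ω₁
    · rw [indicator_of_mem hx]; exact hb _ _ _
    · rw [indicator_of_notMem hx, abs_zero]; exact hK
  set N : ℝ := ∑ _q : Fin n × Fin n, K with hN
  have hρ : ∀ x, √(∑ q, H x q ^ 2) ≤ N := fun x =>
    (sqrt_sum_le (H x)).trans (Finset.sum_le_sum fun q _ => hHb x q)
  obtain ⟨σ, s1, s2, s3⟩ := polar μ H hHm
  set νf := μ.withDensity fun x => ENNReal.ofReal √(∑ q, H x q ^ 2) with hν
  have hνle : ∀ B, MeasurableSet B → νf B ≤ ENNReal.ofReal N * volume (g ⁻¹' B ∩ Ω₂) := by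
    intro B hB
    rw [hν, withDensity_apply _ hB]
    calc ∫⁻ x in B, ENNReal.ofReal √(∑ q, H x q ^ 2) ∂μ
        ≤ ∫⁻ _ in B, ENNReal.ofReal N ∂μ :=
          lintegral_mono fun x => ENNReal.ofReal_le_ofReal (hρ x)
      _ = ENNReal.ofReal N * μ B := by rw [setLIntegral_const]
      _ = _ := by
          rw [hμ, Measure.map_apply_of_aemeasurable hgm hB,
            Measure.restrict_apply' hΩ₂.measurableSet]
  refine ⟨νf, ⟨hfc.locallyIntegrableOn hΩ₁.measurableSet, fun C hC hCΩ => ?_,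
    fun x j i => σ x (j, i), ?_, ?_, ?_, fun φ hφ j i => ?_⟩, N + 1, ?_, fun A hA hAm => ?_⟩
  · refine (hνle C hC.measurableSet).trans_lt (ENNReal.mul_lt_top ENNReal.ofReal_lt_top ?_)
    refine (measure_mono ?_).trans_lt
      (hC.image_of_continuousOn (hfc.mono hCΩ)).measure_lt_top
    rintro y ⟨hy, hy2⟩
    exact ⟨g y, hy, hfg y hy2⟩
  · exact measurable_pi_lambda _ fun j => measurable_pi_lambda _ fun i =>
      (measurable_pi_apply (j, i)).comp s1
  · filter_upwards [s2] with x hx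
    unfold frobNorm
    rw [← hx, Fintype.sum_prod_type]
  · refine le_antisymm ((hνle _ hΩ₁.measurableSet.compl).trans (le_of_eq ?_)) zero_le
    have : g ⁻¹' Ω₁ᶜ ∩ Ω₂ = ∅ := by
      ext y; simp only [mem_inter_iff, mem_preimage, mem_compl_iff, mem_empty_iff_false, iff_false]
      exact fun hy => hy.1 (hg21 hy.2)
    rw [this, measure_empty, mul_zero]
  · refine (hr j i φ hφ).trans ?_
    rw [s3 φ (j, i), hμ, integral_map hgm]
    · congr 1
      rw [← integral_indicator hΩ₂.measurableSet]
      congr 1; ext y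
      by_cases hy : y ∈ Ω₂
      · rw [indicator_of_mem hy, hHg y hy]
        unfold pull
        rw [indicator_of_mem hy]; rfl
      · rw [indicator_of_notMem hy]
        unfold pull
        rw [indicator_of_notMem hy, zero_mul]
    · exact (hφ.1.continuous.measurable.mul
        ((measurable_pi_apply (j, i)).comp hHm)).aestronglyMeasurable
  · have : 0 ≤ N := Finset.sum_nonneg fun _ _ => hK
    linarith
  · have hBe : f ⁻¹' A ∩ Ω₁ = F ⁻¹' A ∩ Ω₁ := by
      ext x
      simp only [mem_inter_iff, mem_preimage]
      constructor
      · rintro ⟨h1, h2⟩; exact ⟨by rwa [hFf x h2], h2⟩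
      · rintro ⟨h1, h2⟩; exact ⟨by rwa [hFf x h2] at h1, h2⟩
    have hBm : MeasurableSet (f ⁻¹' A ∩ Ω₁) := by
      rw [hBe]; exact (hFm hAm).inter hΩ₁.measurableSet
    refine (hνle _ hBm).trans (mul_le_mul' (ENNReal.ofReal_le_ofReal (by linarith))
      (measure_mono ?_))
    rintro y ⟨hy, hy2⟩
    have : f (g y) ∈ A := hy.1
    rwa [hfg y hy2] at this

/-- **Theorem (Statement 1).** If `f : Ω₁ → Ω₂` is a homeomorphism such that
`T_f(u) = u ∘ f` maps `C₀(Ω₂) ∩ BV(Ω₂)` into `BV(Ω₁)`, then `f ∈ BV_loc(Ω₁, Ω₂)` and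
there is `K > 0` with `|Df|(f⁻¹(A)) ≤ K·Lⁿ(A)` for all Borel `A ⊆ Ω₂`. -/
theorem necessity_of_variation_bound {n : ℕ}
    (Ω₁ Ω₂ : Set (En n)) (hΩ₁ : IsOpen Ω₁) (hΩ₂ : IsOpen Ω₂)
    (f g : En n → En n) (hf : IsHomeoOn f g Ω₁ Ω₂)
    (hT : ∀ u : En n → ℝ, MemCZero Ω₂ u → (∃ νu, MemBVs Ω₂ u νu) →
      ∃ νc, MemBVs Ω₁ (u ∘ f) νc) :
    ∃ νf : Measure (En n), MemBVloc Ω₁ f νf ∧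
      ∃ K : ℝ, 0 < K ∧ ∀ A : Set (En n), A ⊆ Ω₂ → MeasurableSet A →
        νf (f ⁻¹' A ∩ Ω₁) ≤ ENNReal.ofReal K * volume A := by
  obtain ⟨C, hC0, hC⟩ := unif hΩ₁ hΩ₂ hf hT
  have hh : ∀ j i : Fin n, ∃ h : En n → ℝ, Measurable h ∧ (∀ y, |h y| ≤ 2 * C) ∧
      ∀ φ, SmoothTest Ω₁ φ →
        ∫ x in Ω₁, f x j * pd i φ x = - ∫ y, pull g Ω₂ φ y * h y := fun j i =>
    exists_h hΩ₁ hΩ₂ hf i j (by positivity) fun φ hφ =>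
      key_est hΩ₁ hΩ₂ hf (fun u hu => sc_isD hΩ₁ hΩ₂ hf hT i hu.1 hu.2) hC0
        (fun u hu A hA => hC i u hu.1 hu.2 A hA) j φ hφ
  choose h h1 h2 h3 using hh
  exact final_step Ω₁ Ω₂ hΩ₁ hΩ₂ f g hf (K := 2 * C) (by positivity) h h1 h2 h3
end
end

section
/- Let f belong to BV(Ω, ℝⁿ), have no jump part, and satisfy f(z) = applim_{x→z} f(x) at every point z ∈ supp|D^c f| at which the approximate limit exists. Then the condition |Df|(f̃⁻¹(A)) ≤ K·Lⁿ(A) for all Borel sets A ⊆ Ω₂ holds if and only if |Df|(f⁻¹(A)) ≤ K·Lⁿ(A) for all Borel sets A ⊆ Ω₂. -/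
open MeasureTheory Metric Set Filter
open scoped ENNReal Topology NNReal

noncomputable section

/-- Almost every point of `Ω` is a Lebesgue point of `f`. -/
theorem ae_approxLimAt_self {n : ℕ} (Ω : Set (En n)) (hΩ : IsOpen Ω) (f : En n → En n)
    (hf : IntegrableOn f Ω volume) :
    ∀ᵐ x ∂(volume : Measure (En n)), x ∈ Ω → ApproxLimAt f x (f x) := by
  have hg : Integrable (Ω.indicator f) volume := hf.integrable_indicator hΩ.measurableSet
  filter_upwards [IsUnifLocDoublingMeasure.ae_tendsto_average_norm_sub volume
    hg.locallyIntegrable 1] with x hx hxΩ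
  have h := hx (l := 𝓝[>] (0 : ℝ)) (fun _ => x) (fun r => r) tendsto_id
    (by
      filter_upwards [self_mem_nhdsWithin] with r hr
      have : (0 : ℝ) < r := hr
      simpa using this.le)
  unfold ApproxLimAt
  refine h.congr' ?_
  obtain ⟨ε, hε, hball⟩ := Metric.isOpen_iff.1 hΩ x hxΩ
  filter_upwards [Ioo_mem_nhdsGT hε] with r hr
  have hae : closedBall x r =ᵐ[volume] ball x r := by
    refine (ae_eq_of_subset_of_measure_ge ball_subset_closedBall ?_
      measurableSet_ball.nullMeasurableSet measure_closedBall_lt_top.ne).symm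
    rw [Measure.addHaar_closedBall _ _ hr.1.le, Measure.addHaar_ball_of_pos _ _ hr.1]
  rw [setAverage_congr hae, setAverage_eq, smul_eq_mul, div_eq_inv_mul, Measure.real]
  congr 1
  refine setIntegral_congr_fun measurableSet_ball ?_
  intro y hy
  have hyΩ : y ∈ Ω := hball (ball_subset_ball hr.2.le hy)
  simp [hyΩ, hxΩ]

/-- Uniqueness of approximate limits in `Ω`. -/
theorem approxLimAt_unique {n : ℕ} (Ω : Set (En n)) (hΩ : IsOpen Ω) (f : En n → En n)
    (hf : IntegrableOn f Ω volume) {x z w : En n} (hx : x ∈ Ω)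
    (hz : ApproxLimAt f x z) (hw : ApproxLimAt f x w) : z = w := by
  unfold ApproxLimAt at hz hw
  have hs := hz.add hw
  obtain ⟨ε, hε, hball⟩ := Metric.isOpen_iff.1 hΩ x hx
  have hle : ‖z - w‖ ≤ 0 + 0 := by
    refine ge_of_tendsto hs ?_
    filter_upwards [Ioo_mem_nhdsGT hε] with r hr
    have hfb : IntegrableOn f (ball x r) volume :=
      hf.mono_set ((ball_subset_ball hr.2.le).trans hball)
    have hc : ∀ c : En n, IntegrableOn (fun y => ‖f y - c‖) (ball x r) volume := fun c =>
      (hfb.sub (integrableOn_const measure_ball_lt_top.ne)).norm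
    have hpos : 0 < (volume (ball x r)).toReal :=
      ENNReal.toReal_pos (measure_ball_pos _ _ hr.1).ne' measure_ball_lt_top.ne
    rw [← add_div, le_div_iff₀ hpos, ← integral_add (hc z) (hc w)]
    have h1 : ∫ _ in ball x r, ‖z - w‖ ∂volume = ‖z - w‖ * (volume (ball x r)).toReal := by
      rw [setIntegral_const, smul_eq_mul, mul_comm, Measure.real]
    rw [← h1]
    refine integral_mono (integrableOn_const measure_ball_lt_top.ne) ((hc z).add (hc w)) ?_
    intro y
    have := norm_sub_le (f y - w) (f y - z)
    simp only [sub_sub_sub_cancel_left] at this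
    show ‖z - w‖ ≤ ‖f y - z‖ + ‖f y - w‖
    linarith
  rw [add_zero] at hle
  exact sub_eq_zero.1 (norm_le_zero_iff.1 hle)

/-- **Lemma (Statement 7).** Let `f ∈ BV(Ω, ℝⁿ)` have no jump part and coincide with its
approximate limit at every point of a null carrier `S` of the Cantor part `|D^c f|`
where the approximate limit exists.  Then `|Df|(f̃⁻¹(A)) ≤ K·Lⁿ(A)` for all Borel
`A ⊆ Ω₂` if and only if `|Df|(f⁻¹(A)) ≤ K·Lⁿ(A)` for all Borel `A ⊆ Ω₂`. -/
theorem tilde_preimage_bound_iff_preimage_bound {n : ℕ}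
    (Ω Ω₂ : Set (En n)) (hΩ : IsOpen Ω) (hΩ₂ : IsOpen Ω₂)
    (f : En n → En n) (hmaps : MapsTo f Ω Ω₂)
    (ν : Measure (En n)) (hBV : MemBV Ω f ν) (hjump : NoJumpPart f ν)
    (S : Set (En n)) (hSmeas : MeasurableSet S) (hSnull : volume S = 0)
    (hScarrier : ν.restrict Sᶜ ≪ volume)
    (hfS : ∀ z ∈ S, ∀ w : En n, ApproxLimAt f z w → f z = w)
    (K : ℝ) :
    (∀ A : Set (En n), A ⊆ Ω₂ → MeasurableSet A →
        ν (tildePreimage f A ∩ Ω) ≤ ENNReal.ofReal K * volume A)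
      ↔ (∀ A : Set (En n), A ⊆ Ω₂ → MeasurableSet A →
        ν (f ⁻¹' A ∩ Ω) ≤ ENNReal.ofReal K * volume A) := by
  obtain ⟨hint, -, -⟩ := hBV
  have hL : ∀ᵐ x ∂ν, x ∈ Sᶜ → x ∈ Ω → ApproxLimAt f x (f x) :=
    (ae_restrict_iff' hSmeas.compl).1 (hScarrier.ae_le (ae_approxLimAt_self Ω hΩ f hint))
  have hE : ∀ᵐ x ∂ν, ∃ z, ApproxLimAt f x z := hjump
  have key : ∀ A : Set (En n), ν (tildePreimage f A ∩ Ω) = ν (f ⁻¹' A ∩ Ω) := by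
    intro A
    refine measure_congr ?_
    filter_upwards [hL, hE] with x h1 h2
    have : (x ∈ tildePreimage f A ∩ Ω) = (x ∈ f ⁻¹' A ∩ Ω) := by
      refine propext (and_congr_left fun hxΩ => ?_)
      have hself : ApproxLimAt f x (f x) := by
        by_cases hxS : x ∈ S
        · obtain ⟨z, hz⟩ := h2
          rw [hfS x hxS z hz]
          exact hz
        · exact h1 hxS hxΩ
      constructor
      · rintro ⟨z, hzA, hz⟩
        have := approxLimAt_unique Ω hΩ f hint hxΩ hself hz
        simpa [this] using hzA
      · intro hx
        exact ⟨f x, hx, hself⟩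
    exact this
  simp only [key]
end
end

section
/- Assume that f : Ω₁ → Ω₂ is a homeomorphism of bounded variation between open subsets of ℝⁿ. Then the inequality ∫_{f⁻¹(A)} |D^a f| dLⁿ ≤ C₁·Lⁿ(A) for all Borel sets A ⊆ Ω₂ is equivalent to |D^a f(x)| ≤ C₁·|J_f(x)| for Lⁿ-a.e. x ∈ Ω₁. -/
open MeasureTheory Metric Set Filter
open scoped ENNReal Topology NNReal

noncomputable section

/-- `L` is the approximate differential of `f` at `x`. -/
def HasApproxDerivAt {n : ℕ} (f : En n → En n) (L : En n →L[ℝ] En n) (x : En n) : Prop :=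
  ∀ ε : ℝ, 0 < ε → Tendsto (fun r : ℝ =>
      volume {y ∈ Metric.ball x r | ε * ‖y - x‖ < ‖f y - f x - L (y - x)‖}
        / volume (Metric.ball x r))
    (nhdsWithin 0 (Set.Ioi 0)) (nhds 0)

section Helpers

variable {n : ℕ}

lemma aux_hasDerivAt_kernel (φ : En n → ℝ) (hφ : ContDiff ℝ (⊤ : ℕ∞) φ) (w : En n) {t : ℝ}
    (ht : 0 < t) :
    HasDerivAt (fun s : ℝ => (s ^ n)⁻¹ * φ (s⁻¹ • w))
      (-((t ^ n)⁻¹ * (t⁻¹ * (n * φ (t⁻¹ • w) + fderiv ℝ φ (t⁻¹ • w) (t⁻¹ • w))))) t := by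
  have h1 : HasDerivAt (fun s : ℝ => s⁻¹ • w) ((-(t ^ 2)⁻¹) • w) t :=
    (hasDerivAt_inv ht.ne').smul_const w
  have h2 : HasFDerivAt φ (fderiv ℝ φ (t⁻¹ • w)) (t⁻¹ • w) :=
    (hφ.differentiable (by simp) _).hasFDerivAt
  have h3 := h2.comp_hasDerivAt t h1
  have h4 : HasDerivAt (fun s : ℝ => (s ^ n)⁻¹) (-(n * t ^ (n - 1)) / (t ^ n) ^ 2) t :=
    (hasDerivAt_pow n t).inv (pow_ne_zero _ ht.ne')
  have h5 := h4.mul h3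
  refine h5.congr_deriv ?_
  simp only [map_smul, smul_eq_mul, Function.comp]
  rcases n with _ | m
  · simp; field_simp
  · simp only [Nat.add_sub_cancel]
    field_simp
    push_cast
    ring

lemma aux_bdd (φ : En n → ℝ) (hφ : ContDiff ℝ (⊤ : ℕ∞) φ) (hc : HasCompactSupport φ) :
    Continuous (fun ζ => n * φ ζ + fderiv ℝ φ ζ ζ) ∧
      ∃ C, ∀ ζ, ‖n * φ ζ + fderiv ℝ φ ζ ζ‖ ≤ C := by
  have hcont : Continuous (fun ζ => n * φ ζ + fderiv ℝ φ ζ ζ) := by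
    have := hφ.continuous_fderiv (by simp)
    have h0 := hφ.continuous
    fun_prop
  refine ⟨hcont, hcont.bounded_above_of_compact_support ?_⟩
  refine HasCompactSupport.intro hc (fun x hx => ?_)
  have h1 : φ x = 0 := image_eq_zero_of_notMem_tsupport hx
  have h2 : fderiv ℝ φ x = 0 := by
    have : x ∉ tsupport (fderiv ℝ φ) := fun h => hx (tsupport_fderiv_subset ℝ h)
    exact image_eq_zero_of_notMem_tsupport this
  simp [h1, h2]

lemma aux_hasDerivAt_int (φ : En n → ℝ) (hφ : ContDiff ℝ (⊤ : ℕ∞) φ) (hc : HasCompactSupport φ)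
    (μ : Measure (En n)) (h : En n → ℝ) (hh : Integrable h μ) (x : En n) {t : ℝ} (ht : 0 < t) :
    HasDerivAt (fun s : ℝ => ∫ z, h z * ((s ^ n)⁻¹ * φ (s⁻¹ • (z - x))) ∂μ)
      (∫ z, h z * (-((t ^ n)⁻¹ * (t⁻¹ * (n * φ (t⁻¹ • (z - x)) +
        fderiv ℝ φ (t⁻¹ • (z - x)) (t⁻¹ • (z - x)))))) ∂μ) t := by
  obtain ⟨hcont, C, hC⟩ := aux_bdd φ hφ hc
  have h0 := hφ.continuous
  obtain ⟨M, hM⟩ := h0.bounded_above_of_compact_support hc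
  have key := hasDerivAt_integral_of_dominated_loc_of_deriv_le (μ := μ) (𝕜 := ℝ)
    (bound := fun z => ‖h z‖ * ((((t/2) ^ n)⁻¹ * ((t/2)⁻¹ * C))))
    (F := fun (s : ℝ) z => h z * ((s ^ n)⁻¹ * φ (s⁻¹ • (z - x))))
    (F' := fun (t : ℝ) z => h z * (-((t ^ n)⁻¹ * (t⁻¹ * (n * φ (t⁻¹ • (z - x)) +
        fderiv ℝ φ (t⁻¹ • (z - x)) (t⁻¹ • (z - x)))))))
    (x₀ := t) (s := Ioi (t/2)) (Ioi_mem_nhds (by linarith)) ?_ ?_ ?_ ?_ ?_ ?_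
  · exact key.2
  · refine Eventually.of_forall (fun s => hh.aestronglyMeasurable.mul ?_)
    apply Continuous.aestronglyMeasurable
    fun_prop
  · refine hh.mul_bdd (c := (t ^ n)⁻¹ * M) ?_ ?_
    · apply Continuous.aestronglyMeasurable
      fun_prop
    · refine Eventually.of_forall (fun z => ?_)
      rw [norm_mul, Real.norm_of_nonneg (by positivity)]
      gcongr
      exact hM _
  · refine hh.aestronglyMeasurable.mul ?_
    apply Continuous.aestronglyMeasurable
    have : Continuous (fun z : En n => t⁻¹ • (z - x)) := by fun_prop
    have := hcont.comp this
    simp only [Function.comp_def] at this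
    fun_prop
  · refine Eventually.of_forall (fun z s hs => ?_)
    have hs' : t / 2 < s := hs
    have hs0 : 0 < s := by linarith
    rw [norm_mul, norm_neg, norm_mul, norm_mul, Real.norm_of_nonneg (by positivity : 0 ≤ (s^n)⁻¹),
      Real.norm_of_nonneg (by positivity : 0 ≤ s⁻¹)]
    gcongr
    exact hC _
  · exact hh.norm.mul_const _
  · refine Eventually.of_forall (fun z s hs => ?_)
    have hs' : t / 2 < s := hs
    exact (aux_hasDerivAt_kernel φ hφ (z - x) (by linarith)).const_mul _

lemma aux_frob_le (M : Fin n → Fin n → ℝ) (h : frobNorm M = 1) (j i : Fin n) : |M j i| ≤ 1 := by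
  unfold frobNorm at h
  rw [Real.sqrt_eq_one] at h
  have h1 : M j i ^ 2 ≤ ∑ i, M j i ^ 2 :=
    Finset.single_le_sum (f := fun i => M j i ^ 2) (fun i _ => sq_nonneg _) (Finset.mem_univ i)
  have h2 : ∑ i, M j i ^ 2 ≤ ∑ j, ∑ i, M j i ^ 2 :=
    Finset.single_le_sum (f := fun j => ∑ i, M j i ^ 2)
      (fun j _ => Finset.sum_nonneg (fun i _ => sq_nonneg _)) (Finset.mem_univ j)
  rw [abs_le_one_iff_mul_self_le_one]
  nlinarith

/-- the rescaled test function -/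
def tst (φ : En n → ℝ) (x : En n) (t : ℝ) (i : Fin n) (z : En n) : ℝ :=
  (t ^ n)⁻¹ * ((t⁻¹ • (z - x)) i * φ (t⁻¹ • (z - x)))

lemma aux_supp (φ : En n → ℝ) (hs : ∀ ζ, φ ζ ≠ 0 → ‖ζ‖ ≤ 2) (x : En n) {t : ℝ} (ht : 0 < t)
    {z : En n} (hz : φ (t⁻¹ • (z - x)) ≠ 0) : z ∈ closedBall x (2 * t) := by
  have := hs _ hz
  rw [norm_smul, Real.norm_of_nonneg (by positivity)] at this
  rw [mem_closedBall, dist_eq_norm]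
  rwa [inv_mul_le_iff₀ ht, mul_comm] at this

lemma aux_tst_smooth (φ : En n → ℝ) (hφ : ContDiff ℝ (⊤ : ℕ∞) φ)
    (hs : ∀ ζ, φ ζ ≠ 0 → ‖ζ‖ ≤ 2) (x : En n) {t : ℝ} (ht : 0 < t) (i : Fin n) {Ω : Set (En n)}
    (hΩ : closedBall x (2 * t) ⊆ Ω) : SmoothTest Ω (tst φ x t i) := by
  have hsub : tsupport (tst φ x t i) ⊆ closedBall x (2 * t) := by
    refine closure_minimal ?_ isClosed_closedBall
    intro z hz
    refine aux_supp φ hs x ht (fun h => hz ?_)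
    simp [tst, h]
  refine ⟨?_, ?_, hsub.trans hΩ⟩
  · unfold tst
    have h1 : ContDiff ℝ (⊤ : ℕ∞) (fun z : En n => t⁻¹ • (z - x)) := by fun_prop
    have h2 : ContDiff ℝ (⊤ : ℕ∞) (fun z : En n => (t⁻¹ • (z - x)) i) := by fun_prop
    exact contDiff_const.mul (h2.mul (hφ.comp h1))
  · exact (isCompact_closedBall x (2*t)).of_isClosed_subset (isClosed_tsupport _) hsub

lemma aux_tst_fderiv (φ : En n → ℝ) (hφ : ContDiff ℝ (⊤ : ℕ∞) φ) (x : En n) (t : ℝ)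
    (i : Fin n) (z : En n) :
    fderiv ℝ (tst φ x t i) z (EuclideanSpace.single i 1) =
      (t ^ n)⁻¹ * (t⁻¹ * (φ (t⁻¹ • (z - x)) + (t⁻¹ • (z - x)) i *
        fderiv ℝ φ (t⁻¹ • (z - x)) (EuclideanSpace.single i 1))) := by
  have h1 : HasFDerivAt (fun z : En n => t⁻¹ • (z - x)) (t⁻¹ • ContinuousLinearMap.id ℝ (En n)) z :=
    ((hasFDerivAt_id z).sub_const x).fun_const_smul t⁻¹
  have h2 : HasFDerivAt (fun z : En n => (t⁻¹ • (z - x)) i)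
      ((EuclideanSpace.proj i : En n →L[ℝ] ℝ).comp (t⁻¹ • ContinuousLinearMap.id ℝ (En n))) z :=
    (EuclideanSpace.proj i : En n →L[ℝ] ℝ).hasFDerivAt.comp z h1
  have h3 : HasFDerivAt φ (fderiv ℝ φ (t⁻¹ • (z - x))) (t⁻¹ • (z - x)) :=
    (hφ.differentiable (by simp) _).hasFDerivAt
  have h4 := h3.comp z h1
  have h5 := (h2.mul h4).const_mul ((t ^ n)⁻¹)
  have h6 : HasFDerivAt (tst φ x t i) _ z := h5
  rw [h6.fderiv]
  simp
  ring

lemma aux_sum (φ : En n → ℝ) (ζ : En n) :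
    ∑ i, (φ ζ + ζ i * fderiv ℝ φ ζ (EuclideanSpace.single i 1)) =
      n * φ ζ + fderiv ℝ φ ζ ζ := by
  rw [Finset.sum_add_distrib]
  congr 1
  · simp
  · generalize fderiv ℝ φ ζ = L
    conv_rhs => rw [← (EuclideanSpace.basisFun (Fin n) ℝ).sum_repr ζ]
    simp [map_sum]

lemma aux_ibp {Ω : Set (En n)} {f : En n → En n} {σ : En n → Fin n → Fin n → ℝ}
    {ν : Measure (En n)} (hint : IntegrableOn f Ω volume)
    (hσν : IsVariationMeasure Ω f σ ν)
    (φ : En n → ℝ) (hφ : ContDiff ℝ (⊤ : ℕ∞) φ) 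
    (hs : ∀ ζ, φ ζ ≠ 0 → ‖ζ‖ ≤ 2) (x : En n) {t : ℝ} (ht : 0 < t)
    (hΩ : closedBall x (2 * t) ⊆ Ω) (j : Fin n) :
    ∫ z in Ω, f z j * (-((t ^ n)⁻¹ * (t⁻¹ * (n * φ (t⁻¹ • (z - x)) +
        fderiv ℝ φ (t⁻¹ • (z - x)) (t⁻¹ • (z - x)))))) ∂volume
      = ∑ i, ∫ z, tst φ x t i z * σ z j i ∂ν := by
  have hj : Integrable (fun z => f z j) (volume.restrict Ω) := by
    have := (EuclideanSpace.proj j : En n →L[ℝ] ℝ).integrable_comp hint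
    simpa using this
  have h1 : ∀ i, ∫ z, tst φ x t i z * σ z j i ∂ν =
      ∫ z in Ω, -(f z j * fderiv ℝ (tst φ x t i) z (EuclideanSpace.single i 1)) := by
    intro i
    rw [integral_neg, hσν.2.2.2 _ (aux_tst_smooth φ hφ hs x ht i hΩ) j i, neg_neg]
  simp_rw [h1]
  rw [← integral_finsetSum]
  · congr 1
    ext z
    simp_rw [aux_tst_fderiv φ hφ]
    rw [← aux_sum, Finset.mul_sum, Finset.mul_sum, ← Finset.sum_neg_distrib, Finset.mul_sum]
    refine Finset.sum_congr rfl (fun i _ => by ring)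
  · intro i _
    have hst := aux_tst_smooth φ hφ hs x ht i hΩ
    have hcont : Continuous (fun z => fderiv ℝ (tst φ x t i) z (EuclideanSpace.single i 1)) := by
      have := hst.1.continuous_fderiv (by simp)
      fun_prop
    have hcs : HasCompactSupport
        (fun z => fderiv ℝ (tst φ x t i) z (EuclideanSpace.single i 1)) := by
      exact hst.2.1.fderiv_apply ℝ _
    obtain ⟨C, hC⟩ := hcont.bounded_above_of_compact_support hcs
    exact (hj.mul_bdd hcont.aestronglyMeasurable (Eventually.of_forall hC)).neg

lemma aux_deriv_bound {Ω : Set (En n)} {f : En n → En n} {σ : En n → Fin n → Fin n → ℝ}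
    {ν : Measure (En n)} [IsFiniteMeasure ν]
    (hσν : IsVariationMeasure Ω f σ ν)
    (φ : En n → ℝ) {M K : ℝ} (hM : ∀ ζ, |φ ζ| ≤ M)
    (hs : ∀ ζ, φ ζ ≠ 0 → ‖ζ‖ ≤ 2) (x : En n) {t : ℝ} (ht : 0 < t) (hK : 0 ≤ K)
    (hν : ν (ball x (3 * t)) ≤ ENNReal.ofReal (K * (3 * t) ^ n)) (j : Fin n) :
    ‖∑ i, ∫ z, tst φ x t i z * σ z j i ∂ν‖ ≤ n * (2 * M * K * 3 ^ n) := by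
  have hM0 : 0 ≤ M := (abs_nonneg _).trans (hM 0)
  have hb : ∀ i, ‖∫ z, tst φ x t i z * σ z j i ∂ν‖ ≤ 2 * M * K * 3 ^ n := by
    intro i
    have h1 : ‖∫ z, tst φ x t i z * σ z j i ∂ν‖ ≤
        ∫ z, (ball x (3 * t)).indicator (fun _ => (t ^ n)⁻¹ * (2 * M)) z ∂ν := by
      refine norm_integral_le_of_norm_le ?_ ?_
      · exact (integrable_const _).indicator measurableSet_ball
      · filter_upwards [hσν.2.1] with z hz
        have hz' := aux_frob_le _ hz j i
        by_cases h0 : φ (t⁻¹ • (z - x)) = 0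
        · simp only [tst, h0, mul_zero, zero_mul, norm_zero]
          exact indicator_nonneg (fun _ _ => by positivity) _
        · have hmem := aux_supp φ hs x ht h0
          have hmem' : z ∈ ball x (3 * t) := closedBall_subset_ball (by linarith) hmem
          rw [indicator_of_mem hmem', norm_mul, tst, norm_mul, norm_mul,
            Real.norm_of_nonneg (by positivity : 0 ≤ (t ^ n)⁻¹)]
          have h2 : ‖(t⁻¹ • (z - x)) i‖ ≤ 2 := (PiLp.norm_apply_le _ i).trans (hs _ h0)
          have h3 : ‖φ (t⁻¹ • (z - x))‖ ≤ M := hM _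
          calc _ ≤ (t ^ n)⁻¹ * (2 * M) * 1 := by
                gcongr
                exact hz'
            _ = _ := mul_one _
    refine h1.trans ?_
    rw [integral_indicator_const _ measurableSet_ball, smul_eq_mul]
    have h2 : ν.real (ball x (3 * t)) ≤ K * (3 * t) ^ n :=
      ENNReal.toReal_le_of_le_ofReal (by positivity) hν
    calc _ ≤ (K * (3 * t) ^ n) * ((t ^ n)⁻¹ * (2 * M)) := by gcongr
      _ = _ := by
        rw [mul_pow]; field_simp
  refine (norm_sum_le _ _).trans ((Finset.sum_le_sum (fun i _ => hb i)).trans ?_)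
  simp

lemma aux_int_kernel (φ : En n → ℝ) (x : En n) {t : ℝ} (ht : 0 < t) :
    ∫ z, (t ^ n)⁻¹ * φ (t⁻¹ • (z - x)) = ∫ z, φ z := by
  rw [integral_const_mul, integral_sub_right_eq_self (fun z => φ (t⁻¹ • z)) x,
    Measure.integral_comp_inv_smul_of_nonneg _ _ ht.le]
  simp only [finrank_euclideanSpace, Fintype.card_fin, smul_eq_mul]
  field_simp

lemma aux_limit {Ω : Set (En n)} (hΩo : IsOpen Ω) (h : En n → ℝ) (hh : IntegrableOn h Ω volume)
    (φ : En n → ℝ) (hφ : Continuous φ) (hc : HasCompactSupport φ)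
    (hs : ∀ ζ, φ ζ ≠ 0 → ‖ζ‖ ≤ 2) {x : En n} (hx : x ∈ Ω) (hcont : ContinuousAt h x) :
    Tendsto (fun s : ℝ => ∫ z in Ω, h z * ((s ^ n)⁻¹ * φ (s⁻¹ • (z - x)))) (𝓝[>] 0)
      (𝓝 (h x * ∫ z, φ z)) := by
  obtain ⟨M, hM⟩ := hφ.bounded_above_of_compact_support hc
  rw [Metric.tendsto_nhds]
  intro ε hε
  set I := ∫ z, |φ z| with hI
  have hI0 : 0 ≤ I := integral_nonneg (fun _ => abs_nonneg _)
  have hε' : 0 < ε / (I + 1) := by positivity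
  obtain ⟨δ, hδ, hδ'⟩ := Metric.continuousAt_iff.1 hcont _ hε'
  obtain ⟨ρ, hρ, hρ'⟩ := Metric.isOpen_iff.1 hΩo x hx
  have hev : ∀ᶠ s : ℝ in 𝓝[>] 0, s < min δ ρ / 3 :=
    mem_nhdsWithin_of_mem_nhds (Iio_mem_nhds (by positivity))
  filter_upwards [self_mem_nhdsWithin, hev] with s hs0 hs1
  have hs0 : 0 < s := hs0
  have hsδ : 2 * s < δ := by linarith [min_le_left δ ρ]
  have hsρ : 2 * s < ρ := by linarith [min_le_right δ ρ]
  have hkc : Continuous (fun z => (s ^ n)⁻¹ * φ (s⁻¹ • (z - x))) := by fun_prop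
  have hkcs : HasCompactSupport (fun z => (s ^ n)⁻¹ * φ (s⁻¹ • (z - x))) := by
    refine HasCompactSupport.intro (isCompact_closedBall x (2 * s)) (fun z hz => ?_)
    by_contra h0
    exact hz (aux_supp φ hs x hs0 (fun h1 => h0 (by simp [h1])))
  have hki := hkc.integrable_of_hasCompactSupport (μ := volume) hkcs
  obtain ⟨M', hM'⟩ := hkc.bounded_above_of_compact_support hkcs
  have e1 : h x * ∫ z, φ z = ∫ z in Ω, h x * ((s ^ n)⁻¹ * φ (s⁻¹ • (z - x))) := by
    rw [setIntegral_eq_integral_of_forall_compl_eq_zero, integral_const_mul, aux_int_kernel φ x hs0]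
    intro z hz
    by_contra h0
    refine hz (hρ' (closedBall_subset_ball hsρ (aux_supp φ hs x hs0 (fun h1 => h0 (by simp [h1])))))
  rw [dist_eq_norm, e1, ← integral_sub (Integrable.mul_bdd hh hkc.aestronglyMeasurable
    (Eventually.of_forall hM')) (hki.integrableOn.const_mul _)]
  have e2 : ‖∫ z in Ω, (h z * ((s ^ n)⁻¹ * φ (s⁻¹ • (z - x)))
      - h x * ((s ^ n)⁻¹ * φ (s⁻¹ • (z - x))))‖ ≤
      ∫ z in Ω, ε / (I + 1) * ‖(s ^ n)⁻¹ * φ (s⁻¹ • (z - x))‖ := by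
    refine norm_integral_le_of_norm_le (hki.norm.integrableOn.const_mul _) ?_
    refine Eventually.of_forall (fun z => ?_)
    rw [← sub_mul, norm_mul]
    by_cases h0 : φ (s⁻¹ • (z - x)) = 0
    · simp [h0]
    · have hz := closedBall_subset_ball hsδ (aux_supp φ hs x hs0 h0)
      have := hδ' hz
      rw [dist_eq_norm] at this
      gcongr
  refine e2.trans_lt ?_
  rw [integral_const_mul]
  have e3 : ∫ z in Ω, ‖(s ^ n)⁻¹ * φ (s⁻¹ • (z - x))‖ ≤ I := by
    refine (setIntegral_le_integral hki.norm (Eventually.of_forall fun _ => norm_nonneg _)).trans ?_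
    simp_rw [norm_mul]
    rw [Real.norm_of_nonneg (by positivity : 0 ≤ (s ^ n)⁻¹)]
    exact (aux_int_kernel (fun z => ‖φ z‖) x hs0).le
  calc _ ≤ ε / (I + 1) * I := by gcongr
    _ < ε := by
      rw [div_mul_eq_mul_div, div_lt_iff₀ (by positivity)]
      nlinarith

lemma aux_one {Ω : Set (En n)} (hΩo : IsOpen Ω) {f : En n → En n}
    {σ : En n → Fin n → Fin n → ℝ}
    {ν : Measure (En n)} [IsFiniteMeasure ν] (hf : ContinuousOn f Ω)
    (hint : IntegrableOn f Ω volume) (hσν : IsVariationMeasure Ω f σ ν)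
    (φ : En n → ℝ) (hφ : ContDiff ℝ (⊤ : ℕ∞) φ) (hc : HasCompactSupport φ)
    {M K : ℝ} (hM : ∀ ζ, |φ ζ| ≤ M)
    (hs : ∀ ζ, φ ζ ≠ 0 → ‖ζ‖ ≤ 2) (x : En n) {r δ : ℝ} (hr : 0 < r) (hrδ : 3 * r < δ) (hK : 0 ≤ K)
    (hΩ : ball x δ ⊆ Ω)
    (hν : ∀ s, 0 < s → s < δ → ν (ball x s) ≤ ENNReal.ofReal (K * s ^ n)) (j : Fin n) :
    |(∫ z in Ω, f z j * ((r ^ n)⁻¹ * φ (r⁻¹ • (z - x)))) - f x j * ∫ z, φ z| ≤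
      n * (2 * M * K * 3 ^ n) * r := by
  have hx : x ∈ Ω := hΩ (mem_ball_self (by linarith))
  have hj : Integrable (fun z => f z j) (volume.restrict Ω) := by
    have := (EuclideanSpace.proj j : En n →L[ℝ] ℝ).integrable_comp hint
    simpa using this
  have hcx : ContinuousAt (fun z => f z j) x := by
    have h1 : ContinuousAt f x := hf.continuousAt (hΩo.mem_nhds hx)
    exact (EuclideanSpace.proj j : En n →L[ℝ] ℝ).continuous.continuousAt.comp h1
  have hM0 : 0 ≤ M := (abs_nonneg _).trans (hM 0)
  have hlim := aux_limit hΩo (fun z => f z j) hj φ hφ.continuous hc hs hx hcx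
  have hlim2 := (hlim.const_sub (∫ z in Ω, f z j * ((r ^ n)⁻¹ * φ (r⁻¹ • (z - x))))).norm
  refine le_of_tendsto hlim2 ?_
  have hev : ∀ᶠ s : ℝ in 𝓝[>] 0, s < r := mem_nhdsWithin_of_mem_nhds (Iio_mem_nhds hr)
  filter_upwards [self_mem_nhdsWithin, hev] with a ha0 har
  have ha0 : 0 < a := ha0
  have := Convex.norm_image_sub_le_of_norm_hasDerivWithin_le (𝕜 := ℝ)
    (f := fun s : ℝ => ∫ z in Ω, f z j * ((s ^ n)⁻¹ * φ (s⁻¹ • (z - x))))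
    (s := Icc a r) (x := a) (y := r) (C := n * (2 * M * K * 3 ^ n))
    (fun t ht => (aux_hasDerivAt_int φ hφ hc _ _ hj x (ha0.trans_le ht.1)).hasDerivWithinAt)
    ?_ (convex_Icc a r) ⟨le_rfl, har.le⟩ ⟨har.le, le_rfl⟩
  · refine this.trans ?_
    rw [Real.norm_of_nonneg (by linarith)]
    gcongr
    linarith
  · intro t ht
    have ht0 : 0 < t := ha0.trans_le ht.1
    have ht2 := ht.2
    rw [aux_ibp hint hσν φ hφ hs x ht0 ((closedBall_subset_ball (by linarith)).trans hΩ) j]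
    exact aux_deriv_bound hσν φ hM hs x ht0 hK (hν _ (by positivity) (by linarith)) j

lemma aux_lip {Ω : Set (En n)} (hΩo : IsOpen Ω) {f : En n → En n}
    {σ : En n → Fin n → Fin n → ℝ}
    {ν : Measure (En n)} [IsFiniteMeasure ν] (hf : ContinuousOn f Ω)
    (hint : IntegrableOn f Ω volume) (hσν : IsVariationMeasure Ω f σ ν) {K δ : ℝ} (hK : 0 ≤ K)
    {S : Set (En n)} (hS1 : ∀ x ∈ S, ball x δ ⊆ Ω)
    (hS2 : ∀ x ∈ S, ∀ s, 0 < s → s < δ → ν (ball x s) ≤ ENNReal.ofReal (K * s ^ n))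
    (hS3 : ∀ x ∈ S, ∀ y ∈ S, 3 * dist x y < δ) :
    ∃ C, LipschitzOnWith C f S := by
  let b : ContDiffBump (0 : En n) := ⟨1/2, 1, by norm_num, by norm_num⟩
  set φ := b.normed volume with hφdef
  have hφ : ContDiff ℝ (⊤ : ℕ∞) φ := b.contDiff_normed
  have hc : HasCompactSupport φ := b.hasCompactSupport_normed
  have hI : ∫ z, φ z = 1 := b.integral_normed
  obtain ⟨M, hM⟩ := hφ.continuous.bounded_above_of_compact_support hc
  have hM0 : 0 ≤ M := (norm_nonneg _).trans (hM 0)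
  have hs : ∀ ζ, φ ζ ≠ 0 → ‖ζ‖ ≤ 1 := by
    intro ζ hζ
    have : ζ ∈ Function.support φ := hζ
    rw [b.support_normed_eq] at this
    simpa using (mem_ball_zero_iff.1 this).le
  set B : ℝ := n * (2 * M * K * 3 ^ n) with hB
  have hB0 : 0 ≤ B := by positivity
  have hcoord : ∀ x ∈ S, ∀ y ∈ S, ∀ j, |f x j - f y j| ≤ 2 * B * dist x y := by
    intro x hx y hy j
    rcases eq_or_ne x y with rfl | hne
    · simp
    have hr : 0 < dist x y := dist_pos.2 hne
    set r := dist x y with hrdef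
    set e : En n := r⁻¹ • (y - x) with he
    have hen : ‖e‖ ≤ 1 := by
      rw [he, norm_smul, Real.norm_of_nonneg (by positivity), ← dist_eq_norm, dist_comm y x, ← hrdef,
        inv_mul_cancel₀ hr.ne']
    have h1 := aux_one hΩo hf hint hσν φ hφ hc hM (fun ζ hζ => (hs ζ hζ).trans (by norm_num)) x hr
      (hS3 x hx y hy) hK (hS1 x hx) (hS2 x hx) j
    have hsm : ContDiff ℝ (⊤ : ℕ∞) (fun ζ => φ (ζ + e)) :=
      hφ.comp (contDiff_id.add contDiff_const)
    have hcs : HasCompactSupport (fun ζ => φ (ζ + e)) :=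
      hc.comp_homeomorph (Homeomorph.addRight e)
    have h2 := aux_one hΩo hf hint hσν (fun ζ => φ (ζ + e)) hsm hcs
      (fun ζ => hM (ζ + e)) (fun ζ hζ => ?_) y hr
      (hS3 x hx y hy) hK (hS1 y hy) (hS2 y hy) j
    · have e1 : ∀ z, r⁻¹ • (z - y) + e = r⁻¹ • (z - x) := by
        intro z
        rw [he, ← smul_add]
        congr 1
        abel
      simp only [e1] at h2
      rw [integral_add_right_eq_self φ e, hI, mul_one] at h2
      rw [hI, mul_one] at h1
      rw [abs_le] at *
      constructor <;> linarith [h1.1, h1.2, h2.1, h2.2]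
    · have h3 := hs _ hζ
      calc ‖ζ‖ = ‖(ζ + e) - e‖ := by simp
        _ ≤ ‖ζ + e‖ + ‖e‖ := norm_sub_le _ _
        _ ≤ 2 := by linarith
  refine ⟨Real.toNNReal (n * (2 * B)), LipschitzOnWith.of_dist_le_mul (fun x hx y hy => ?_)⟩
  rw [Real.coe_toNNReal _ (by positivity), dist_eq_norm]
  have h1 : ‖f x - f y‖ ≤ ∑ j, |f x j - f y j| := by
    rw [EuclideanSpace.norm_eq]
    refine (Real.sqrt_le_left (Finset.sum_nonneg fun _ _ => abs_nonneg _)).2 ?_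
    simpa using Finset.sum_sq_le_sq_sum_of_nonneg (s := Finset.univ)
      (f := fun j => |f x j - f y j|) (fun i _ => abs_nonneg _)
  refine h1.trans ((Finset.sum_le_sum (fun j _ => hcoord x hx y hy j)).trans ?_)
  simp [mul_assoc]

lemma aux_vol_ball (x : En n) {r : ℝ} (hr : 0 < r) :
    volume (ball x r) = ENNReal.ofReal (r ^ n) * volume (ball (0 : En n) 1) := by
  simpa using Measure.addHaar_ball_of_pos (volume : Measure (En n)) x hr

lemma aux_vol_closedBall (x : En n) {r : ℝ} (hr : 0 < r) :
    volume (closedBall x r) = ENNReal.ofReal (r ^ n) * volume (ball (0 : En n) 1) := by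
  simpa using Measure.addHaar_closedBall (volume : Measure (En n)) x hr.le

lemma aux_unique {f : En n → En n} {L L' : En n →L[ℝ] En n} {x : En n}
    (h : HasApproxDerivAt f L x) (h' : HasApproxDerivAt f L' x) : L = L' := by
  by_contra hne
  obtain ⟨v, hv⟩ : ∃ v, (L - L') v ≠ 0 := by
    by_contra hcon
    push Not at hcon
    exact hne (sub_eq_zero.1 (ContinuousLinearMap.ext hcon))
  have hv0 : v ≠ 0 := by rintro rfl; simp at hv
  have hvn : 0 < ‖v‖ := norm_pos_iff.2 hv0
  have hw : 0 < ‖(L - L') v‖ := norm_pos_iff.2 hv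
  set w : En n := (2 * ‖v‖)⁻¹ • v with hwdef
  obtain ⟨ε, hε, hεv⟩ : ∃ ε : ℝ, 0 < ε ∧ 2 * ε * ‖v‖ < ‖(L - L') v‖ := by
    refine ⟨‖(L - L') v‖ / (4 * ‖v‖), by positivity, ?_⟩
    field_simp
    nlinarith
  set U : Set (En n) := {u | 2 * ε * ‖u‖ < ‖(L - L') u‖} ∩ ball 0 1 with hU
  have hUo : IsOpen U := by
    refine IsOpen.inter (isOpen_lt (by fun_prop) (by fun_prop)) isOpen_ball
  have hwU : w ∈ U := by
    constructor
    · simp only [mem_ofPred_eq, hwdef, map_smul, norm_smul]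
      rw [mul_left_comm]
      gcongr
      simp [hv0]
    · rw [mem_ball_zero_iff, hwdef, norm_smul, Real.norm_of_nonneg (by positivity)]
      field_simp
      norm_num
  obtain ⟨ρ, hρ, hρU⟩ := Metric.isOpen_iff.1 hUo w hwU
  have hsum := (h ε hε).add (h' ε hε)
  rw [add_zero] at hsum
  have hω0 : volume (ball (0 : En n) 1) ≠ 0 := (measure_ball_pos volume _ one_pos).ne'
  have hωt : volume (ball (0 : En n) 1) ≠ ⊤ := measure_ball_lt_top.ne
  have hle : ENNReal.ofReal (ρ ^ n) ≤ 0 := by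
    refine ge_of_tendsto hsum ?_
    filter_upwards [self_mem_nhdsWithin] with r hr
    have hr : 0 < r := hr
    rw [← ENNReal.add_div]
    have hsub : ball (x + r • w) (r * ρ) ⊆
        {y ∈ Metric.ball x r | ε * ‖y - x‖ < ‖f y - f x - L (y - x)‖} ∪
        {y ∈ Metric.ball x r | ε * ‖y - x‖ < ‖f y - f x - L' (y - x)‖} := by
      intro y hy
      set u : En n := r⁻¹ • (y - x) with hu
      have hyu : y - x = r • u := by rw [hu, smul_inv_smul₀ hr.ne']
      have huU : u ∈ U := by
        apply hρU
        rw [mem_ball, dist_eq_norm] at hy ⊢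
        have : y - (x + r • w) = r • (u - w) := by
          rw [smul_sub, ← hyu]; abel
        rw [this, norm_smul, Real.norm_of_nonneg hr.le] at hy
        exact lt_of_mul_lt_mul_left hy hr.le
      have hyb : y ∈ ball x r := by
        rw [mem_ball, dist_eq_norm, hyu, norm_smul, Real.norm_of_nonneg hr.le]
        have := mem_ball_zero_iff.1 huU.2
        nlinarith
      have hineq : 2 * ε * ‖y - x‖ < ‖(L - L') (y - x)‖ := by
        rw [hyu, map_smul, norm_smul r u, norm_smul r ((L - L') u), mul_left_comm]
        have := huU.1
        have hr' : 0 < ‖r‖ := by simpa using hr.ne'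
        exact mul_lt_mul_of_pos_left this hr'
      by_contra hcon
      simp only [mem_union, mem_ofPred_eq, not_or, not_and, not_lt] at hcon
      have h1 := hcon.1 hyb
      have h2 := hcon.2 hyb
      have h3 : (L - L') (y - x) = (f y - f x - L' (y - x)) - (f y - f x - L (y - x)) := by
        rw [sub_apply]; abel
      rw [h3] at hineq
      have := norm_sub_le (f y - f x - L' (y - x)) (f y - f x - L (y - x))
      linarith
    calc ENNReal.ofReal (ρ ^ n) = volume (ball (x + r • w) (r * ρ)) / volume (ball x r) := by
          rw [aux_vol_ball _ (by positivity), aux_vol_ball _ hr,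
            ENNReal.mul_div_mul_right _ _ hω0 hωt, mul_pow,
            ENNReal.ofReal_mul (by positivity), mul_comm, ENNReal.mul_div_cancel_right]
          · simpa using by positivity
          · simp
      _ ≤ _ := by
          gcongr
          exact (measure_mono hsub).trans (measure_union_le _ _)
  have : 0 < ρ ^ n := by positivity
  simp only [nonpos_iff_eq_zero, ENNReal.ofReal_eq_zero] at hle
  linarith

lemma aux_approx {f : En n → En n} {L : En n →L[ℝ] En n} {x : En n} {S : Set (En n)}
    (h : HasFDerivWithinAt f L S x)
    (hd : Tendsto (fun r => volume (Sᶜ ∩ closedBall x r) / volume (closedBall x r)) (𝓝[>] 0) (𝓝 0)) :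
    HasApproxDerivAt f L x := by
  intro ε hε
  have h1 := h.isLittleO.def hε
  rw [eventually_nhdsWithin_iff, Metric.eventually_nhds_iff] at h1
  obtain ⟨δ, hδ, hδ'⟩ := h1
  have hev : ∀ᶠ s : ℝ in 𝓝[>] 0, s < δ := mem_nhdsWithin_of_mem_nhds (Iio_mem_nhds hδ)
  refine tendsto_of_tendsto_of_tendsto_of_le_of_le' tendsto_const_nhds hd
    (Eventually.of_forall fun _ => zero_le) ?_
  filter_upwards [self_mem_nhdsWithin, hev] with r hr hrδ
  have hr : 0 < r := hr
  rw [aux_vol_ball x hr, ← aux_vol_closedBall x hr]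
  gcongr
  rintro y ⟨hy1, hy2⟩
  refine ⟨fun hyS => ?_, ball_subset_closedBall hy1⟩
  have := hδ' ((mem_ball.1 hy1).trans hrδ) hyS
  linarith

lemma aux_closed1 (Ω : Set (En n)) (δ : ℝ) : IsClosed {x | ball x δ ⊆ Ω} := by
  have : {x | ball x δ ⊆ Ω} = (thickening δ Ωᶜ)ᶜ := by
    ext x
    simp only [mem_ofPred_eq, mem_compl_iff, mem_thickening_iff, not_exists, not_and, not_lt]
    constructor
    · intro h z hz
      by_contra hcon
      exact hz (h (by rw [mem_ball, dist_comm]; linarith))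
    · intro h z hz
      by_contra hcon
      have := h z hcon
      rw [mem_ball, dist_comm] at hz
      linarith
  rw [this]
  exact isOpen_thickening.isClosed_compl

lemma aux_closed2 (ν : Measure (En n)) (s : ℝ) (c : ℝ≥0∞) : IsClosed {x | ν (ball x s) ≤ c} := by
  rw [← isOpen_compl_iff, Metric.isOpen_iff]
  intro x hx
  simp only [mem_compl_iff, mem_ofPred_eq, not_le] at hx
  have hun : ball x s = ⋃ k : ℕ, ball x (s - 1 / ((k : ℝ) + 1)) := by
    ext y
    simp only [mem_iUnion, mem_ball]
    constructor
    · intro hy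
      obtain ⟨k, hk⟩ := exists_nat_one_div_lt (sub_pos.2 hy)
      exact ⟨k, by linarith⟩
    · rintro ⟨k, hk⟩
      have : (0 : ℝ) < 1 / ((k : ℝ) + 1) := by positivity
      linarith
  have hmono : Monotone (fun k : ℕ => ball x (s - 1 / ((k : ℝ) + 1))) := by
    intro k l hkl
    refine ball_subset_ball ?_
    have : 1 / ((l : ℝ) + 1) ≤ 1 / ((k : ℝ) + 1) := by gcongr
    linarith
  rw [hun, hmono.measure_iUnion, lt_iSup_iff] at hx
  obtain ⟨k, hk⟩ := hx
  refine ⟨1 / ((k : ℝ) + 1), by positivity, fun y hy => ?_⟩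
  simp only [mem_compl_iff, mem_ofPred_eq, not_le]
  refine hk.trans_le (measure_mono ?_)
  refine ball_subset_ball' ?_
  rw [mem_ball, dist_comm] at hy
  linarith

/-- Points where the measure `ν` has controlled density at scales below `1/(p+1)`. -/
def goodSet (Ω : Set (En n)) (ν : Measure (En n)) (p : ℕ) : Set (En n) :=
  {x | ball x (1 / ((p : ℝ) + 1)) ⊆ Ω} ∩
    ⋂ (s : ℝ) (_ : 0 < s) (_ : s < 1 / ((p : ℝ) + 1)),
      {x | ν (ball x s) ≤ ENNReal.ofReal (p * s ^ n)}

lemma goodSet_closed (Ω : Set (En n)) (ν : Measure (En n)) (p : ℕ) : IsClosed (goodSet Ω ν p) := by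
  refine (aux_closed1 _ _).inter ?_
  exact isClosed_iInter fun s => isClosed_iInter fun _ => isClosed_iInter fun _ => aux_closed2 _ _ _

lemma goodSet_cover {Ω : Set (En n)} (hΩ : IsOpen Ω) (ν : Measure (En n)) [IsFiniteMeasure ν] :
    ∀ᵐ x ∂(volume : Measure (En n)), x ∈ Ω → ∃ p, x ∈ goodSet Ω ν p := by
  filter_upwards [Besicovitch.ae_tendsto_rnDeriv ν (volume : Measure (En n)),
    Measure.rnDeriv_lt_top ν (volume : Measure (En n))] with x hx hlt hxΩ
  obtain ⟨D, hD, -⟩ := ENNReal.lt_iff_exists_nnreal_btwn.1 hlt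
  have hev := hx.eventually (gt_mem_nhds hD)
  rw [eventually_nhdsWithin_iff, Metric.eventually_nhds_iff] at hev
  obtain ⟨δ, hδ, hδ'⟩ := hev
  obtain ⟨ρ, hρ, hρ'⟩ := Metric.isOpen_iff.1 hΩ x hxΩ
  have hω0 : volume (ball (0 : En n) 1) ≠ 0 := (measure_ball_pos volume _ one_pos).ne'
  have hωt : volume (ball (0 : En n) 1) ≠ ⊤ := measure_ball_lt_top.ne
  obtain ⟨p1, hp1⟩ := exists_nat_one_div_lt (lt_min hδ hρ)
  obtain ⟨p2, hp2⟩ := exists_nat_ge ((D : ℝ) * (volume (ball (0 : En n) 1)).toReal)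
  have hple : (1 : ℝ) / (((max p1 p2 : ℕ) : ℝ) + 1) ≤ 1 / ((p1 : ℝ) + 1) := by
    gcongr
    exact_mod_cast le_max_left p1 p2
  have hp2' : (D : ℝ) * (volume (ball (0 : En n) 1)).toReal ≤ ((max p1 p2 : ℕ) : ℝ) :=
    hp2.trans (by exact_mod_cast le_max_right p1 p2)
  have hmδ := min_le_left δ ρ
  have hmρ := min_le_right δ ρ
  refine ⟨max p1 p2, ?_, ?_⟩
  · exact (ball_subset_ball (by linarith)).trans hρ'
  · simp only [mem_iInter, mem_ofPred_eq]
    intro s hs0 hs1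
    have h1 := hδ' (y := s) (by rw [Real.dist_eq, sub_zero, abs_of_pos hs0]; linarith) hs0
    have hv0 : volume (closedBall x s) ≠ 0 := (measure_closedBall_pos volume x hs0).ne'
    have hvt : volume (closedBall x s) ≠ ⊤ := measure_closedBall_lt_top.ne
    have h2 : ν (closedBall x s) ≤ D * volume (closedBall x s) :=
      (ENNReal.div_le_iff hv0 hvt).1 h1.le
    refine (measure_mono ball_subset_closedBall).trans (h2.trans ?_)
    rw [aux_vol_closedBall x hs0, ← ENNReal.ofReal_toReal hωt, ← ENNReal.ofReal_coe_nnreal,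
      ← ENNReal.ofReal_mul (by positivity), ← ENNReal.ofReal_mul (by positivity)]
    apply ENNReal.ofReal_le_ofReal
    calc _ = ((D : ℝ) * (volume (ball (0 : En n) 1)).toReal) * s ^ n := by ring
      _ ≤ _ := by gcongr

/-- structure theorem: a continuous BV map is, up to a null set, countably piecewise
differentiable, and approximately differentiable there. -/
lemma aux_structure {Ω : Set (En n)} (hΩo : IsOpen Ω) {f : En n → En n}
    {σ : En n → Fin n → Fin n → ℝ}
    {ν : Measure (En n)} [IsFiniteMeasure ν] (hf : ContinuousOn f Ω)
    (hint : IntegrableOn f Ω volume) (hσν : IsVariationMeasure Ω f σ ν) :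
    ∃ (S : ℕ → Set (En n)) (f' : ℕ → En n → En n →L[ℝ] En n),
      (∀ k, MeasurableSet (S k)) ∧ (∀ k, S k ⊆ Ω) ∧ volume (Ω \ ⋃ k, S k) = 0 ∧
      (∀ k, ∀ x ∈ S k, HasFDerivWithinAt f (f' k x) (S k) x) ∧
      (∀ k, ∀ x ∈ S k, HasApproxDerivAt f (f' k x) x) := by
  let c : ℕ → En n := TopologicalSpace.denseSeq (En n)
  let P : ℕ × ℕ → Set (En n) := fun pq =>
    goodSet Ω ν pq.1 ∩ ball (c pq.2) (1 / ((pq.1 : ℝ) + 1) / 6)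
  have hPm : ∀ pq, MeasurableSet (P pq) := fun pq =>
    (goodSet_closed Ω ν pq.1).measurableSet.inter measurableSet_ball
  have hPΩ : ∀ pq, P pq ⊆ Ω := fun pq x hx => hx.1.1 (mem_ball_self (by positivity))
  have hPlip : ∀ pq, ∃ C, LipschitzOnWith C f (P pq) := by
    intro pq
    refine aux_lip hΩo hf hint hσν (K := pq.1) (δ := 1 / ((pq.1 : ℝ) + 1)) (by positivity)
      (fun x hx => hx.1.1) (fun x hx s hs0 hs1 => ?_) (fun x hx y hy => ?_)
    · have := hx.1.2
      simp only [mem_iInter, mem_ofPred_eq] at this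
      exact this s hs0 hs1
    · have h1 := mem_ball.1 hx.2
      have h2 := mem_ball'.1 hy.2
      have := dist_triangle x (c pq.2) y
      linarith
  have hae : ∀ pq, ∀ᵐ x ∂(volume : Measure (En n)), x ∈ P pq →
      HasFDerivWithinAt f (fderivWithin ℝ f (P pq) x) (P pq) x ∧
      HasApproxDerivAt f (fderivWithin ℝ f (P pq) x) x := by
    intro pq
    obtain ⟨C, hC⟩ := hPlip pq
    filter_upwards [hC.ae_differentiableWithinAt_of_mem (μ := volume),
      Besicovitch.ae_tendsto_measure_inter_div_of_measurableSet (volume : Measure (En n))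
        (hPm pq).compl] with x h1 h2 hx
    have h3 := (h1 hx).hasFDerivWithinAt
    refine ⟨h3, aux_approx h3 ?_⟩
    rwa [indicator_of_notMem (by simpa using hx)] at h2
  let N : ℕ × ℕ → Set (En n) := fun pq => toMeasurable volume {x | ¬ (x ∈ P pq →
      HasFDerivWithinAt f (fderivWithin ℝ f (P pq) x) (P pq) x ∧
      HasApproxDerivAt f (fderivWithin ℝ f (P pq) x) x)}
  have hN0 : ∀ pq, volume (N pq) = 0 := fun pq => by
    rw [measure_toMeasurable]
    exact ae_iff.1 (hae pq)
  have hNP : ∀ pq, ∀ x ∈ P pq \ N pq,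
      HasFDerivWithinAt f (fderivWithin ℝ f (P pq) x) (P pq) x ∧
      HasApproxDerivAt f (fderivWithin ℝ f (P pq) x) x := by
    intro pq x hx
    by_contra hcon
    exact hx.2 (subset_toMeasurable _ _ (fun h => hcon (h hx.1)))
  let e : ℕ → ℕ × ℕ := Nat.unpair
  refine ⟨fun k => P (e k) \ N (e k), fun k x => fderivWithin ℝ f (P (e k)) x,
    fun k => (hPm _).diff (measurableSet_toMeasurable _ _),
    fun k => sdiff_subset.trans (hPΩ _), ?_, fun k x hx => (hNP _ x hx).1.mono sdiff_subset,
    fun k x hx => (hNP _ x hx).2⟩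
  have hN : volume (⋃ pq, N pq) = 0 := measure_iUnion_null hN0
  have hcov := goodSet_cover hΩo ν
  rw [ae_iff] at hcov
  refine measure_mono_null ?_ (measure_union_null hN hcov)
  rintro x ⟨hxΩ, hx⟩
  by_cases hxp : ∃ p, x ∈ goodSet Ω ν p
  · left
    obtain ⟨p, hp⟩ := hxp
    obtain ⟨q, hq⟩ := (TopologicalSpace.denseRange_denseSeq (En n)).exists_dist_lt x
      (ε := 1 / ((p : ℝ) + 1) / 6) (by positivity)
    have hxP : x ∈ P (p, q) := ⟨hp, hq⟩
    by_contra hcon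
    apply hx
    refine mem_iUnion.2 ⟨Nat.pair p q, ?_⟩
    have : e (Nat.pair p q) = (p, q) := Nat.unpair_pair p q
    simp only [this]
    exact ⟨hxP, fun h => hcon (mem_iUnion.2 ⟨_, h⟩)⟩
  · right
    intro h
    exact hxp (h hxΩ)

end Helpers

/-- **Lemma (Statement 8).** For a homeomorphism `f : Ω₁ → Ω₂` of bounded variation with
polar decomposition `Df = σ ⬝ ν`, the bound `∫_{f⁻¹(A)} |D^a f| dLⁿ ≤ C₁·Lⁿ(A)` for all
Borel `A ⊆ Ω₂` is equivalent to the pointwise bound `|D^a f(x)| ≤ C₁·|J_f(x)|` a.e. in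
`Ω₁`, where `D^a f = σ · (dν/dLⁿ)` and `J_f` is the Jacobian of the approximate
differential of `f`. -/
theorem abs_cont_part_bound_iff_pointwise {n : ℕ}
    (Ω₁ Ω₂ : Set (En n)) (hΩ₁ : IsOpen Ω₁) (hΩ₂ : IsOpen Ω₂)
    (f g : En n → En n) (hf : IsHomeoOn f g Ω₁ Ω₂)
    (σ : En n → Fin n → Fin n → ℝ) (ν : Measure (En n))
    (hint : IntegrableOn f Ω₁ volume) (hfin : ν Ω₁ < ⊤)
    (hσν : IsVariationMeasure Ω₁ f σ ν)
    (C₁ : ℝ) (hC₁ : 0 < C₁) :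
    (∀ A : Set (En n), A ⊆ Ω₂ → MeasurableSet A →
        ∫⁻ x in f ⁻¹' A ∩ Ω₁,
            ENNReal.ofReal
              (frobNorm fun j i => σ x j i * (ν.rnDeriv volume x).toReal) ∂volume
          ≤ ENNReal.ofReal C₁ * volume A)
      ↔ (∀ᵐ x ∂volume.restrict Ω₁, ∀ L : En n →L[ℝ] En n, HasApproxDerivAt f L x →
          frobNorm (fun j i => σ x j i * (ν.rnDeriv volume x).toReal) ≤ C₁ * |L.det|) := by
  obtain ⟨hfc, hgc, hfm, hgm, hgf, hfg⟩ := hf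
  have hνfin : IsFiniteMeasure ν := by
    refine ⟨?_⟩
    have h1 : (univ : Set (En n)) ⊆ Ω₁ ∪ Ω₁ᶜ := by simp
    refine (measure_mono h1).trans_lt ((measure_union_le _ _).trans_lt ?_)
    rw [hσν.2.2.1, add_zero]
    exact hfin
  obtain ⟨S, f', hSm, hSΩ, hS0, hSd, hSa⟩ := aux_structure hΩ₁ hfc hint hσν
  have hinj : InjOn f Ω₁ := fun x hx y hy h => by rw [← hgf x hx, ← hgf y hy, h]
  have hσm : Measurable σ := hσν.1
  set D : En n → ℝ := fun x => frobNorm fun j i => σ x j i * (ν.rnDeriv volume x).toReal with hD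
  have hDm : Measurable D := by
    have h1 : ∀ j i, Measurable fun x => σ x j i := fun j i =>
      (measurable_pi_apply i).comp ((measurable_pi_apply j).comp hσm)
    have h2 : Measurable fun x => (ν.rnDeriv volume x).toReal :=
      (Measure.measurable_rnDeriv ν volume).ennreal_toReal
    unfold frobNorm at hD
    rw [hD]
    refine Real.continuous_sqrt.measurable.comp ?_
    refine Finset.measurable_sum _ fun j _ => Finset.measurable_sum _ fun i _ => ?_
    exact ((h1 j i).mul h2).pow_const 2
  have hDm' : Measurable fun x => ENNReal.ofReal (D x) := hDm.ennreal_ofReal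
  have harea : ∀ k, ∀ T ⊆ S k, MeasurableSet T →
      ∫⁻ x in T, ENNReal.ofReal |(f' k x).det| = volume (f '' T) := fun k T hT hTm =>
    lintegral_abs_det_fderiv_eq_addHaar_image volume hTm
      (fun x hx => (hSd k x (hT hx)).mono hT) (hinj.mono (hT.trans (hSΩ k)))
  have himg : ∀ k, ∀ T ⊆ S k, MeasurableSet T → MeasurableSet (f '' T) := fun k T hT hTm =>
    measurable_image_of_fderivWithin hTm
      (fun x hx => (hSd k x (hT hx)).mono hT) (hinj.mono (hT.trans (hSΩ k)))
  constructor
  · intro H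
    have hk : ∀ k, ∀ᵐ x ∂volume, x ∈ S k → D x ≤ C₁ * |(f' k x).det| := by
      intro k
      rw [← ae_restrict_iff' (hSm k)]
      have h1 : (fun x => ENNReal.ofReal (D x)) ≤ᵐ[volume.restrict (S k)]
          (fun x => ENNReal.ofReal C₁ * ENNReal.ofReal |(f' k x).det|) := by
        refine ae_le_of_forall_setLIntegral_le_of_sigmaFinite hDm' (fun s hs _ => ?_)
        rw [Measure.restrict_restrict hs, lintegral_const_mul' _ _ ENNReal.ofReal_ne_top,
          harea k _ inter_subset_right (hs.inter (hSm k))]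
        have h2 := H (f '' (s ∩ S k)) ?_ (himg k _ inter_subset_right (hs.inter (hSm k)))
        · refine le_trans (lintegral_mono_set ?_) h2
          intro x hx
          exact ⟨mem_image_of_mem f hx, hSΩ k hx.2⟩
        · rintro _ ⟨x, hx, rfl⟩
          exact hfm (hSΩ k hx.2)
      filter_upwards [h1] with x hx
      rw [← ENNReal.ofReal_mul hC₁.le] at hx
      exact (ENNReal.ofReal_le_ofReal_iff (by positivity)).1 hx
    rw [ae_restrict_iff' hΩ₁.measurableSet]
    have hS0' : ∀ᵐ x ∂(volume : Measure (En n)), x ∉ Ω₁ \ ⋃ k, S k := measure_eq_zero_iff_ae_notMem.1 hS0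
    filter_upwards [ae_all_iff.2 hk, hS0'] with x hx hxS hxΩ L hL
    have hxU : x ∈ ⋃ k, S k := by
      by_contra hcon
      exact hxS ⟨hxΩ, hcon⟩
    obtain ⟨k, hxk⟩ := mem_iUnion.1 hxU
    rw [aux_unique hL (hSa k x hxk)]
    exact hx k hxk
  · intro H A hA hAm
    rw [ae_restrict_iff' hΩ₁.measurableSet] at H
    have hpre : MeasurableSet (f ⁻¹' A ∩ Ω₁) := by
      have h1 : Measurable (Ω₁.restrict f) := (continuousOn_iff_continuous_restrict.1 hfc).measurable
      have h2 := hΩ₁.measurableSet.subtype_image (h1 hAm)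
      convert h2 using 1
      ext x
      simp only [mem_inter_iff, mem_preimage, mem_image, Subtype.exists, restrict_apply,
        exists_and_right, exists_eq_right]
      exact ⟨fun h => ⟨h.2, h.1⟩, fun ⟨h, h'⟩ => ⟨h', h⟩⟩
    let T : ℕ → Set (En n) := fun k => disjointed S k ∩ (f ⁻¹' A ∩ Ω₁)
    have hTS : ∀ k, T k ⊆ S k := fun k => inter_subset_left.trans (disjointed_subset S k)
    have hTm : ∀ k, MeasurableSet (T k) := fun k => (MeasurableSet.disjointed hSm k).inter hpre
    have hTd : Pairwise (Function.onFun Disjoint T) := fun i j hij =>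
      ((disjoint_disjointed S) hij).mono inter_subset_left inter_subset_left
    have hTΩ : ∀ k, T k ⊆ Ω₁ := fun k => (hTS k).trans (hSΩ k)
    have hId : Pairwise (Function.onFun Disjoint fun k => f '' T k) := by
      intro i j hij
      refine Set.disjoint_left.2 ?_
      rintro _ ⟨x, hx, rfl⟩ ⟨y, hy, hxy⟩
      have := hinj (hTΩ j hy) (hTΩ i hx) hxy
      subst this
      exact Set.disjoint_left.1 (hTd hij) hx hy
    have hcov : (f ⁻¹' A ∩ Ω₁ : Set (En n)) ≤ᵐ[volume] ⋃ k, T k := by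
      have hS0' : ∀ᵐ x ∂(volume : Measure (En n)), x ∉ Ω₁ \ ⋃ k, S k := measure_eq_zero_iff_ae_notMem.1 hS0
      filter_upwards [hS0'] with x hx hxA
      have hxU : x ∈ ⋃ k, disjointed S k := by
        rw [iUnion_disjointed]
        by_contra hcon
        exact hx ⟨hxA.2, hcon⟩
      obtain ⟨k, hxk⟩ := mem_iUnion.1 hxU
      exact mem_iUnion.2 ⟨k, hxk, hxA⟩
    calc ∫⁻ x in f ⁻¹' A ∩ Ω₁, ENNReal.ofReal (D x)
        ≤ ∫⁻ x in ⋃ k, T k, ENNReal.ofReal (D x) := lintegral_mono_set' hcov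
      _ = ∑' k, ∫⁻ x in T k, ENNReal.ofReal (D x) := lintegral_iUnion hTm hTd _
      _ ≤ ∑' k, ENNReal.ofReal C₁ * volume (f '' T k) := by
          refine ENNReal.tsum_le_tsum fun k => ?_
          rw [← harea k _ (hTS k) (hTm k), ← lintegral_const_mul' _ _ ENNReal.ofReal_ne_top]
          refine lintegral_mono_ae ?_
          rw [ae_restrict_iff' (hTm k)]
          filter_upwards [H] with x hx hxT
          rw [← ENNReal.ofReal_mul hC₁.le]
          exact ENNReal.ofReal_le_ofReal (hx (hTΩ k hxT) _ (hSa k x (hTS k hxT)))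
      _ = ENNReal.ofReal C₁ * volume (⋃ k, f '' T k) := by
          rw [ENNReal.tsum_mul_left, measure_iUnion hId fun k => himg k _ (hTS k) (hTm k)]
      _ ≤ ENNReal.ofReal C₁ * volume A := by
          gcongr
          refine iUnion_subset fun k => ?_
          rintro _ ⟨x, hx, rfl⟩
          exact hx.2.1
end
end
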